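/- arXiv:1804.02206 — 2 statements merged into one kernel-verified Lean document; each statement's English description precedes it below -/
import Mathlib

section
/- Let q > 2 and λ, Λ, M > 0. There is a radius R = R(λ, Λ, M, n, q) > 0 such that for every embedded, regular C¹ curve u : ℝ/ℤ → ℝⁿ with [u']_{W^{1-1/q,q}} < ∞, λ ≤ |u'| ≤ Λ, and TP(u) ≤ M, and every C¹ curve ũ : ℝ/ℤ → ℝⁿ with ‖(ũ − u)'‖_{L^∞} ≤ R, one has bil(ũ) ≤ 2 bil(u) < ∞. -/
open MeasureTheory Set Filter
open scoped RealInnerProductSpace ENNReal Topology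

noncomputable section

/-- The distance on the circle `ℝ/ℤ` between the points represented by `x` and `y`. -/
def circDist (x y : ℝ) : ℝ := ‖((x - y : ℝ) : AddCircle (1 : ℝ))‖

/-- The representative of `z` modulo `1` lying in `(-1/2, 1/2]`. -/
def wrap (z : ℝ) : ℝ := 1 / 2 - Int.fract (1 / 2 - z)

/-- Squared wedge norm `|a ∧ b|² = |a|²|b|² - ⟨a,b⟩²`. -/
def wedgeSq {n : ℕ} (a b : EuclideanSpace ℝ (Fin n)) : ℝ :=
  ‖a‖ ^ 2 * ‖b‖ ^ 2 - ⟪a, b⟫ ^ 2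

/-- Wedge inner product `⟨a∧b, c∧d⟩ = ⟨a,c⟩⟨b,d⟩ - ⟨a,d⟩⟨b,c⟩`. -/
def wedgeInner {n : ℕ} (a b c d : EuclideanSpace ℝ (Fin n)) : ℝ :=
  ⟪a, c⟫ * ⟪b, d⟫ - ⟪a, d⟫ * ⟪b, c⟫

/-- Fundamental domain for double integrals over `(ℝ/ℤ)²`. -/
def unitSq : Set (ℝ × ℝ) := Ioc (0 : ℝ) 1 ×ˢ Ioc (0 : ℝ) 1

/-- The tangent-point functional `TP` (extended-real-valued). -/
def TPe {n : ℕ} (q : ℝ) (u : ℝ → EuclideanSpace ℝ (Fin n)) : ℝ≥0∞ :=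
  ENNReal.ofReal (1 / q) *
    ∫⁻ p in unitSq, ENNReal.ofReal
      (wedgeSq (deriv u p.2) (u p.1 - u p.2) ^ (q / 2) / ‖u p.1 - u p.2‖ ^ (2 * q))

/-- The tangent-point functional `TP` (real-valued). -/
def TPr {n : ℕ} (q : ℝ) (u : ℝ → EuclideanSpace ℝ (Fin n)) : ℝ := (TPe q u).toReal

/-- The `q`-th power of the Sobolev–Slobodeckii seminorm `[f]_{W^{s,q}}` on `ℝ/ℤ`. -/
def sobSemPow {n : ℕ} (s q : ℝ) (f : ℝ → EuclideanSpace ℝ (Fin n)) : ℝ≥0∞ :=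
  ∫⁻ p in unitSq, ENNReal.ofReal (‖f p.1 - f p.2‖ ^ q / circDist p.1 p.2 ^ (1 + s * q))

/-- The `W^{s,q}`-norm `‖f‖_{L^q} + [f]_{W^{s,q}}`. -/
def Wnorm {n : ℕ} (s q : ℝ) (f : ℝ → EuclideanSpace ℝ (Fin n)) : ℝ :=
  (∫ x in Ioc (0 : ℝ) 1, ‖f x‖ ^ q) ^ (1 / q) + (sobSemPow s q f).toReal ^ (1 / q)

/-- The bi-Lipschitz constant `bil(u) = sup_{x ≢ y} |x-y|_{ℝ/ℤ}/|u(x)-u(y)|`. -/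
def bil {n : ℕ} (u : ℝ → EuclideanSpace ℝ (Fin n)) : ℝ≥0∞ :=
  ⨆ (x : ℝ) (y : ℝ) (_ : circDist x y ≠ 0),
    ENNReal.ofReal (circDist x y) / ENNReal.ofReal ‖u x - u y‖

/-- The `L^∞`-norm of the derivative of `u`. -/
def linfD {n : ℕ} (u : ℝ → EuclideanSpace ℝ (Fin n)) : ℝ≥0∞ :=
  ⨆ x : ℝ, (‖deriv u x‖₊ : ℝ≥0∞)

/-- A periodic curve is embedded if it is injective on the circle `ℝ/ℤ`. -/
def Embedded {n : ℕ} (u : ℝ → EuclideanSpace ℝ (Fin n)) : Prop :=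
  ∀ x y : ℝ, u x = u y → ((x : AddCircle (1 : ℝ)) = (y : AddCircle (1 : ℝ)))

/-- A curve is regular if `min_{ℝ/ℤ} |u'| > 0`. -/
def Regular {n : ℕ} (u : ℝ → EuclideanSpace ℝ (Fin n)) : Prop :=
  0 < ⨅ x : ℝ, ‖deriv u x‖

/-- Orthogonal projection of `b` onto the orthogonal complement of `ℝ a`. -/
def projPerp {n : ℕ} (a b : EuclideanSpace ℝ (Fin n)) : EuclideanSpace ℝ (Fin n) :=
  b - (⟪b, a⟫ / ‖a‖ ^ 2) • a

/-- The classical tangent-point functional (extended-real-valued). -/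
def TPcle {n : ℕ} (q : ℝ) (u : ℝ → EuclideanSpace ℝ (Fin n)) : ℝ≥0∞ :=
  ENNReal.ofReal (1 / q) *
    ∫⁻ p in unitSq, ENNReal.ofReal
      (‖projPerp (deriv u p.2) (u p.1 - u p.2)‖ ^ q / ‖u p.1 - u p.2‖ ^ (2 * q) *
        (‖deriv u p.1‖ * ‖deriv u p.2‖))

/-- The integrand of the functional `M(u; v, w)`. -/
def Mintegrand {n : ℕ} (q : ℝ) (u v w : ℝ → EuclideanSpace ℝ (Fin n)) (p : ℝ × ℝ) : ℝ :=
  wedgeSq (deriv u p.2) (u p.1 - u p.2) ^ ((q - 2) / 2) / ‖u p.1 - u p.2‖ ^ (2 * q) *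
    wedgeInner (deriv u p.2) (u p.1 - u p.2) (deriv v p.2)
      (w p.1 - w p.2 - wrap (p.1 - p.2) • deriv w p.2)

/-- The functional `M(u; v, w)` appearing in the first variation of `TP`. -/
def Mfun {n : ℕ} (q : ℝ) (u v w : ℝ → EuclideanSpace ℝ (Fin n)) : ℝ :=
  ∫ p in unitSq, Mintegrand q u v w p

/-- The integrand of the functional `A(u; v, w)`. -/
def Aintegrand {n : ℕ} (q : ℝ) (u v w : ℝ → EuclideanSpace ℝ (Fin n)) (p : ℝ × ℝ) : ℝ :=
  wedgeSq (deriv u p.2) (u p.1 - u p.2) ^ (q / 2) / ‖u p.1 - u p.2‖ ^ (2 * q + 2) *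
    ⟪v p.1 - v p.2, w p.1 - w p.2⟫

/-- The functional `A(u; v, w)` appearing in the first variation of `TP`. -/
def Afun {n : ℕ} (q : ℝ) (u v w : ℝ → EuclideanSpace ℝ (Fin n)) : ℝ :=
  ∫ p in unitSq, Aintegrand q u v w p

/-- The first variation `δTP(u)[w] = M(u;u,w) + M(u;w,u) - 2A(u;u,w)`. -/
def deltaTP {n : ℕ} (q : ℝ) (u w : ℝ → EuclideanSpace ℝ (Fin n)) : ℝ :=
  Mfun q u u w + Mfun q u w u - 2 * Afun q u u w

/-- The `H²` inner product on periodic curves. -/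
def H2inner (v w : ℝ → EuclideanSpace ℝ (Fin 3)) : ℝ :=
  ∫ x in Ioc (0 : ℝ) 1,
    (⟪v x, w x⟫ + ⟪deriv v x, deriv w x⟫ + ⟪deriv (deriv v) x, deriv (deriv w) x⟫)

/-- The total energy `E(u) = (κ/2)∫|u''|² + ρ TP(u)`. -/
def energyE (κ ρ q : ℝ) (u : ℝ → EuclideanSpace ℝ (Fin 3)) : ℝ :=
  κ / 2 * (∫ x in Ioc (0 : ℝ) 1, ‖deriv (deriv u) x‖ ^ 2) + ρ * TPr q u

open InnerProductGeometry

/-!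
The angle between the tangent and the chord is what the tangent-point integrand measures. Projecting
the tangents at `s` and `t` onto a fixed direction `e`, the squared cosines of their angles with `e`
differ by at most the two sines of the tangent–chord angles, so the energy dominates the
`W^{1-1/q,q}` seminorm of `cos² ∠(u', e)`. Since `q > 2`, the fractional Morrey inequality makes the
tangent line Hölder continuous with constants depending only on `q`, `lam`, `Λ` and `M`, and by
continuity the oriented tangent then turns by at most `π/6` on intervals of a uniform length `δ`,
where `u` is therefore bi-Lipschitz.

A chord of length `d` orthogonal to the curve keeps the integrand above a multiple of `d^{-q}` on a
square of side comparable to `d`, which costs energy of order `d^{2-q}`; hence `d` is bounded below.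
On the points at distance at least `δ` from `x`, the distance to `u x` is minimal either at an end
point, where the local bound applies, or at the foot of such an orthogonal chord. So all chords obey
`c |x - y| ≤ |u x - u y|` with a uniform `c`, and a perturbation whose derivative is at most `c / 2`
shortens no chord by more than half.
-/

theorem setLIntegral_Ioc_add_eq_of_periodic {f : ℝ → ℝ≥0∞} {T : ℝ} (hT : 0 < T)
    (hf : Function.Periodic f T) (a b : ℝ) :
    ∫⁻ x in Ioc a (a + T), f x = ∫⁻ x in Ioc b (b + T), f x :=
  (isAddFundamentalDomain_Ioc hT a).setLIntegral_eq (isAddFundamentalDomain_Ioc hT b) f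
    hf.map_vadd_zmultiples

theorem setLIntegral_Ioc_prod_Ioc_add_eq_of_periodic {f : ℝ × ℝ → ℝ≥0∞} {T : ℝ} (hT : 0 < T)
    (hf : Measurable f) (hf₁ : ∀ y, Function.Periodic (fun x => f (x, y)) T)
    (hf₂ : ∀ x, Function.Periodic (fun y => f (x, y)) T) (a b a' b' : ℝ) :
    ∫⁻ z in Ioc a (a + T) ×ˢ Ioc b (b + T), f z =
      ∫⁻ z in Ioc a' (a' + T) ×ˢ Ioc b' (b' + T), f z := by
  have iterated (a b : ℝ) : ∫⁻ z in Ioc a (a + T) ×ˢ Ioc b (b + T), f z =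
      ∫⁻ x in Ioc a (a + T), ∫⁻ y in Ioc b (b + T), f (x, y) := by
    rw [Measure.volume_eq_prod, setLIntegral_prod f hf.aemeasurable]
  have periodic_inner : Function.Periodic (fun x => ∫⁻ y in Ioc b (b + T), f (x, y)) T :=
    fun x => lintegral_congr fun y => hf₁ y x
  rw [iterated, iterated, setLIntegral_Ioc_add_eq_of_periodic hT periodic_inner a a']
  exact lintegral_congr fun x => setLIntegral_Ioc_add_eq_of_periodic hT (hf₂ x) b b'

section Average

variable {α β F : Type*} [MeasurableSpace α] [MeasurableSpace β] [NormedAddCommGroup F]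
  [NormedSpace ℝ F]

theorem enorm_integral_rpow_le_lintegral {μ : Measure α} [IsProbabilityMeasure μ] {f : α → F}
    (hf : AEStronglyMeasurable f μ) {q : ℝ} (hq : 1 ≤ q) :
    ‖∫ x, f x ∂μ‖ₑ ^ q ≤ ∫⁻ x, ‖f x‖ₑ ^ q ∂μ := by
  have hq₀ : 0 < q := zero_lt_one.trans_le hq
  calc ‖∫ x, f x ∂μ‖ₑ ^ q ≤ eLpNorm' f 1 μ ^ q := by
        gcongr
        simpa [eLpNorm'] using enorm_integral_le_lintegral_enorm f
    _ ≤ eLpNorm' f q μ ^ q := by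
        gcongr
        exact eLpNorm'_le_eLpNorm'_of_exponent_le one_pos hq μ hf
    _ = ∫⁻ x, ‖f x‖ₑ ^ q ∂μ := (lintegral_rpow_enorm_eq_rpow_eLpNorm' hq₀).symm

theorem enorm_integral_sub_integral_rpow_le {μ : Measure α} {ν : Measure β}
    [IsProbabilityMeasure μ] [IsProbabilityMeasure ν] {f : α → F} {g : β → F}
    (hf : Integrable f μ) (hg : Integrable g ν) {q : ℝ} (hq : 1 ≤ q) :
    ‖∫ x, f x ∂μ - ∫ y, g y ∂ν‖ₑ ^ q ≤ ∫⁻ z, ‖f z.1 - g z.2‖ₑ ^ q ∂μ.prod ν := by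
  have hfg : ∫ x, f x ∂μ - ∫ y, g y ∂ν = ∫ z, (f z.1 - g z.2) ∂μ.prod ν := by
    rw [integral_sub (hf.comp_fst ν) (hg.comp_snd μ), integral_fun_fst, integral_fun_snd]
    simp
  rw [hfg]
  exact enorm_integral_rpow_le_lintegral
    ((hf.comp_fst ν).sub (hg.comp_snd μ)).aestronglyMeasurable hq

theorem enorm_setAverage_sub_setAverage_rpow_le {μ : Measure α} {ν : Measure β} [SFinite μ]
    [SFinite ν] {s : Set α} {t : Set β} (hs : μ s ≠ 0) (hs' : μ s ≠ ∞) (ht : ν t ≠ 0)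
    (ht' : ν t ≠ ∞) {f : α → F} {g : β → F} (hf : IntegrableOn f s μ) (hg : IntegrableOn g t ν)
    {q : ℝ} (hq : 1 ≤ q) :
    ‖⨍ x in s, f x ∂μ - ⨍ y in t, g y ∂ν‖ₑ ^ q ≤
      (μ s)⁻¹ * ((ν t)⁻¹ * ∫⁻ z in s ×ˢ t, ‖f z.1 - g z.2‖ₑ ^ q ∂μ.prod ν) := by
  have : IsProbabilityMeasure ((μ s)⁻¹ • μ.restrict s) :=
    ⟨by simp [ENNReal.inv_mul_cancel hs hs']⟩
  have : IsProbabilityMeasure ((ν t)⁻¹ • ν.restrict t) :=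
    ⟨by simp [ENNReal.inv_mul_cancel ht ht']⟩
  rw [setAverage_eq', setAverage_eq']
  refine (enorm_integral_sub_integral_rpow_le (hf.smul_measure (ENNReal.inv_ne_top.2 hs))
    (hg.smul_measure (ENNReal.inv_ne_top.2 ht)) hq).trans_eq ?_
  rw [Measure.prod_smul_left, Measure.prod_smul_right, lintegral_smul_measure,
    lintegral_smul_measure, Measure.prod_restrict, smul_eq_mul, smul_eq_mul]

end Average

theorem uIoc_add_half_subset (x l : ℝ) : uIoc x (x + l / 2) ⊆ uIoc x (x + l) := by
  rcases le_total 0 l with hl | hl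
  · rw [uIoc_of_le (by linarith), uIoc_of_le (by linarith)]
    exact Ioc_subset_Ioc_right (by linarith)
  · rw [uIoc_of_ge (by linarith), uIoc_of_ge (by linarith)]
    exact Ioc_subset_Ioc_left (by linarith)

section Morrey

variable {F : Type*} [NormedAddCommGroup F]

/-- The `q`-th power of the Sobolev–Slobodeckij (Gagliardo) seminorm of `f` in `W^{s,q}(A)`, for a
subset `A` of the line. -/
def gagliardoPow (s q : ℝ) (f : ℝ → F) (A : Set ℝ) : ℝ≥0∞ :=
  ∫⁻ z in A ×ˢ A, ‖f z.1 - f z.2‖ₑ ^ q / edist z.1 z.2 ^ (1 + s * q)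

theorem setLIntegral_enorm_sub_rpow_le_gagliardoPow {s q : ℝ} {f : ℝ → F} {A I J : Set ℝ}
    {L : ℝ≥0∞} (hq : 0 < q) (hsq : 0 ≤ 1 + s * q) (hI : MeasurableSet I) (hJ : MeasurableSet J)
    (hIA : I ⊆ A) (hJA : J ⊆ A) (hL : L ≠ ∞) (hdist : ∀ x ∈ I, ∀ y ∈ J, edist x y ≤ L) :
    ∫⁻ z in I ×ˢ J, ‖f z.1 - f z.2‖ₑ ^ q ≤ L ^ (1 + s * q) * gagliardoPow s q f A := by
  have hL' : L ^ (1 + s * q) ≠ ∞ := ENNReal.rpow_ne_top_of_nonneg hsq hL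
  calc ∫⁻ z in I ×ˢ J, ‖f z.1 - f z.2‖ₑ ^ q
      ≤ ∫⁻ z in I ×ˢ J,
          L ^ (1 + s * q) * (‖f z.1 - f z.2‖ₑ ^ q / edist z.1 z.2 ^ (1 + s * q)) := by
        refine setLIntegral_mono' (hI.prod hJ) fun z hz => ?_
        obtain hz₀ | hz₀ := eq_or_ne z.1 z.2
        · simp [hz₀, hq]
        · rw [← mul_div_assoc, ENNReal.le_div_iff_mul_le (.inl (by simp [hz₀, edist_ne_top]))
            (.inl (ENNReal.rpow_ne_top_of_nonneg hsq (edist_ne_top _ _))), mul_comm]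
          gcongr
          exact hdist _ hz.1 _ hz.2
    _ = L ^ (1 + s * q) *
          ∫⁻ z in I ×ˢ J, ‖f z.1 - f z.2‖ₑ ^ q / edist z.1 z.2 ^ (1 + s * q) :=
        lintegral_const_mul' _ _ hL'
    _ ≤ L ^ (1 + s * q) * gagliardoPow s q f A := by
        gcongr
        exact lintegral_mono_set (prod_mono hIA hJA)

variable [NormedSpace ℝ F]

theorem enorm_intervalAverage_sub_half_rpow_le {s q x l : ℝ} {f : ℝ → F} {A : Set ℝ} (hq : 1 ≤ q)
    (hsq : 0 ≤ 1 + s * q) (hl : l ≠ 0) (hf : Continuous f) (hA : uIoc x (x + l) ⊆ A) :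
    ‖(⨍ t in x..x + l, f t) - ⨍ t in x..x + l / 2, f t‖ₑ ^ q ≤
      ENNReal.ofReal (2 * |l| ^ (s * q - 1)) * gagliardoPow s q f A := by
  have hl₀ : 0 < |l| := abs_pos.2 hl
  have hdist : ∀ y ∈ uIoc x (x + l), ∀ z ∈ uIoc x (x + l / 2), edist y z ≤ ENNReal.ofReal |l| := by
    intro y hy z hz
    rw [edist_dist, Real.dist_eq, abs_sub_comm]
    refine ENNReal.ofReal_le_ofReal ?_
    simpa using abs_sub_le_of_uIcc_subset_uIcc
      (uIcc_subset_uIcc (uIoc_subset_uIcc hy) (uIoc_subset_uIcc (uIoc_add_half_subset x l hz)))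
  have hvol (r : ℝ) : volume (uIoc x (x + r)) = ENNReal.ofReal |r| := by simp
  have hint (r : ℝ) : IntegrableOn f (uIoc x (x + r)) :=
    (hf.intervalIntegrable x (x + r)).def'
  refine (enorm_setAverage_sub_setAverage_rpow_le (by simpa [hvol] using hl₀) (by simp [hvol])
    (by simpa [hvol] using hl₀) (by simp [hvol]) (hint l) (hint _) hq).trans ?_
  calc (volume (uIoc x (x + l)))⁻¹ * ((volume (uIoc x (x + l / 2)))⁻¹ *
        ∫⁻ z in uIoc x (x + l) ×ˢ uIoc x (x + l / 2), ‖f z.1 - f z.2‖ₑ ^ q)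
      ≤ (ENNReal.ofReal |l|)⁻¹ * ((ENNReal.ofReal |l / 2|)⁻¹ *
        (ENNReal.ofReal |l| ^ (1 + s * q) * gagliardoPow s q f A)) := by
        rw [hvol, hvol]
        gcongr
        exact setLIntegral_enorm_sub_rpow_le_gagliardoPow (by positivity) hsq measurableSet_uIoc
          measurableSet_uIoc hA ((uIoc_add_half_subset x l).trans hA) ENNReal.ofReal_ne_top hdist
    _ = ENNReal.ofReal (2 * |l| ^ (s * q - 1)) * gagliardoPow s q f A := by
        rw [← mul_assoc, ← mul_assoc, ENNReal.ofReal_rpow_of_pos hl₀,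
          ← ENNReal.ofReal_inv_of_pos hl₀, ← ENNReal.ofReal_inv_of_pos (by positivity),
          ← ENNReal.ofReal_mul (by positivity), ← ENNReal.ofReal_mul (by positivity)]
        congr 2
        rw [abs_div, abs_two, show 1 + s * q = s * q - 1 + 2 by ring, Real.rpow_add hl₀,
          Real.rpow_two]
        field_simp

theorem norm_intervalAverage_sub_half_le {s q x l S : ℝ} {f : ℝ → F} {A : Set ℝ} (hq : 1 ≤ q)
    (hsq : 0 ≤ 1 + s * q) (hl : l ≠ 0) (hf : Continuous f) (hA : uIoc x (x + l) ⊆ A) (hS : 0 ≤ S)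
    (hfS : gagliardoPow s q f A ≤ ENNReal.ofReal S) :
    ‖(⨍ t in x..x + l, f t) - ⨍ t in x..x + l / 2, f t‖ ≤
      (2 * S) ^ (1 / q) * |l| ^ (s - 1 / q) := by
  have hq₀ : 0 < q := zero_lt_one.trans_le hq
  have hpow := (enorm_intervalAverage_sub_half_rpow_le hq hsq hl hf hA).trans
    (mul_le_mul_right hfS _)
  rw [← ENNReal.ofReal_mul (by positivity), ← ofReal_norm,
    ENNReal.ofReal_rpow_of_nonneg (norm_nonneg _) hq₀.le,
    ENNReal.ofReal_le_ofReal_iff (by positivity)] at hpow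
  calc _ ≤ (2 * |l| ^ (s * q - 1) * S) ^ (1 / q) := by
        rwa [one_div, Real.le_rpow_inv_iff_of_pos (norm_nonneg _) (by positivity) hq₀]
    _ = (2 * S) ^ (1 / q) * |l| ^ (s - 1 / q) := by
        rw [mul_right_comm, Real.mul_rpow (by positivity) (by positivity), ← Real.rpow_mul
          (abs_nonneg l)]
        congr 2
        field_simp

variable [CompleteSpace F]

theorem tendsto_intervalAverage_nhdsNE_zero {f : ℝ → F} (hf : Continuous f) (x : ℝ) :
    Tendsto (fun l => ⨍ t in x..x + l, f t) (𝓝[≠] 0) (𝓝 (f x)) := by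
  have hderiv := (hf.integral_hasStrictDerivAt x x).hasDerivAt.tendsto_slope_zero
  simpa [interval_average_eq] using hderiv

theorem norm_intervalAverage_sub_self_le {s q x l S : ℝ} {f : ℝ → F} {A : Set ℝ} (hq : 1 ≤ q)
    (hs : 1 / q < s) (hl : l ≠ 0) (hf : Continuous f) (hA : uIoc x (x + l) ⊆ A) (hS : 0 ≤ S)
    (hfS : gagliardoPow s q f A ≤ ENNReal.ofReal S) :
    ‖(⨍ t in x..x + l, f t) - f x‖ ≤
      (2 * S) ^ (1 / q) * |l| ^ (s - 1 / q) / (1 - (1 / 2) ^ (s - 1 / q)) := by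
  have hα : 0 < s - 1 / q := sub_pos.2 hs
  have hs₀ : 0 ≤ s := le_trans (by positivity) hs.le
  have hratio : (1 / 2 : ℝ) ^ (s - 1 / q) < 1 := Real.rpow_lt_one (by norm_num) (by norm_num) hα
  have hsubset (k : ℕ) : uIoc x (x + l * (1 / 2) ^ k) ⊆ A := by
    induction k with
    | zero => simpa using hA
    | succ k ih =>
      rw [pow_succ, ← mul_assoc, ← div_eq_mul_one_div]
      exact (uIoc_add_half_subset _ _).trans ih
  have hgeom (k : ℕ) : dist (⨍ t in x..x + l * (1 / 2) ^ k, f t)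
      (⨍ t in x..x + l * (1 / 2) ^ (k + 1), f t) ≤
        (2 * S) ^ (1 / q) * |l| ^ (s - 1 / q) * ((1 / 2) ^ (s - 1 / q)) ^ k := by
    have hstep := norm_intervalAverage_sub_half_le hq (by positivity)
      (mul_ne_zero hl (by positivity)) hf (hsubset k) hS hfS
    rw [dist_eq_norm, pow_succ, ← mul_assoc, ← div_eq_mul_one_div]
    refine hstep.trans_eq ?_
    rw [abs_mul, abs_of_pos (a := (1 / 2 : ℝ) ^ k) (by positivity),
      Real.mul_rpow (abs_nonneg l) (by positivity), Real.rpow_pow_comm (by norm_num), mul_assoc]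
  have hlim : Tendsto (fun k : ℕ => l * (1 / 2) ^ k) atTop (𝓝[≠] 0) := by
    refine tendsto_nhdsWithin_iff.2 ⟨?_, .of_forall fun k => mul_ne_zero hl (by positivity)⟩
    simpa using (tendsto_pow_atTop_nhds_zero_of_lt_one (r := (1 / 2 : ℝ)) (by norm_num)
      (by norm_num)).const_mul l
  simpa [dist_eq_norm] using dist_le_of_le_geometric_of_tendsto₀ _ _ hratio hgeom
    ((tendsto_intervalAverage_nhdsNE_zero hf x).comp hlim)

/-- The constant in the fractional Morrey inequality; the factor `2` in front comes from comparing
`f x` and `f y` with the average of `f` between them. -/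
def morreyConst (s q : ℝ) : ℝ :=
  2 * (2 ^ (1 / q) / (1 - (1 / 2) ^ (s - 1 / q)))

theorem norm_sub_le_of_gagliardoPow_le {s q x y S : ℝ} {f : ℝ → F} {A : Set ℝ} (hq : 1 ≤ q)
    (hs : 1 / q < s) (hf : Continuous f) (hA : uIoc x y ⊆ A) (hS : 0 ≤ S)
    (hfS : gagliardoPow s q f A ≤ ENNReal.ofReal S) :
    ‖f x - f y‖ ≤ morreyConst s q * S ^ (1 / q) * |x - y| ^ (s - 1 / q) := by
  obtain rfl | hxy := eq_or_ne x y
  · rw [sub_self, norm_zero, sub_self, abs_zero, Real.zero_rpow (sub_pos.2 hs).ne', mul_zero]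
  have hx := norm_intervalAverage_sub_self_le hq hs (sub_ne_zero.2 hxy.symm) hf
    (by rwa [add_sub_cancel]) hS hfS
  have hy := norm_intervalAverage_sub_self_le hq hs (sub_ne_zero.2 hxy) hf
    (by rwa [add_sub_cancel, uIoc_comm]) hS hfS
  rw [add_sub_cancel] at hx hy
  rw [abs_sub_comm] at hx
  rw [interval_average_symm] at hy
  calc ‖f x - f y‖ ≤ ‖(⨍ t in x..y, f t) - f x‖ + ‖(⨍ t in x..y, f t) - f y‖ := by
        simpa only [dist_eq_norm] using dist_triangle_left (f x) (f y) (⨍ t in x..y, f t)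
    _ ≤ morreyConst s q * S ^ (1 / q) * |x - y| ^ (s - 1 / q) := by
        refine (add_le_add hx hy).trans_eq ?_
        rw [morreyConst, Real.mul_rpow zero_le_two hS]
        ring

end Morrey

section Angle

variable {E : Type*} [NormedAddCommGroup E] [InnerProductSpace ℝ E]

theorem abs_cos_sq_sub_cos_sq_le (x y : ℝ) :
    |Real.cos x ^ 2 - Real.cos y ^ 2| ≤ |Real.sin (x - y)| := by
  have h : Real.cos x ^ 2 - Real.cos y ^ 2 = -(Real.sin (x + y) * Real.sin (x - y)) := by
    rw [Real.sin_add, Real.sin_sub]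
    linear_combination Real.cos y ^ 2 * Real.sin_sq_add_cos_sq x -
      Real.cos x ^ 2 * Real.sin_sq_add_cos_sq y
  rw [h, abs_neg, abs_mul]
  exact mul_le_of_le_one_left (abs_nonneg _) (Real.abs_sin_le_one _)

theorem abs_cos_angle_sq_sub_cos_angle_sq_le_sin_angle_of_le {a b : E}
    (hab : angle a b ≤ Real.pi / 2) (e : E) :
    |Real.cos (angle a e) ^ 2 - Real.cos (angle b e) ^ 2| ≤ Real.sin (angle a b) := by
  have hdiff : |angle a e - angle b e| ≤ angle a b := by
    rw [abs_sub_le_iff, sub_le_iff_le_add, sub_le_iff_le_add]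
    exact ⟨angle_le_angle_add_angle a b e, angle_comm a b ▸ angle_le_angle_add_angle b a e⟩
  refine (abs_cos_sq_sub_cos_sq_le _ _).trans ?_
  rw [Real.abs_sin_eq_sin_abs_of_abs_le_pi (hdiff.trans (angle_le_pi a b))]
  exact Real.sin_le_sin_of_le_of_le_pi_div_two
    (by linarith [abs_nonneg (angle a e - angle b e), Real.pi_pos]) hab hdiff

theorem abs_cos_angle_sq_sub_cos_angle_sq_le_sin_angle (a b e : E) :
    |Real.cos (angle a e) ^ 2 - Real.cos (angle b e) ^ 2| ≤ Real.sin (angle a b) := by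
  obtain hab | hab := le_total (angle a b) (Real.pi / 2)
  · exact abs_cos_angle_sq_sub_cos_angle_sq_le_sin_angle_of_le hab e
  · have := abs_cos_angle_sq_sub_cos_angle_sq_le_sin_angle_of_le (a := a) (b := -b)
      (by rw [angle_neg_right]; linarith) e
    rwa [angle_neg_left, angle_neg_right, Real.cos_pi_sub, neg_sq, Real.sin_pi_sub] at this

theorem angle_le_pi_div_six_of_norm_sub_le {a b : E} (hb : b ≠ 0) (hab : ‖a - b‖ ≤ ‖b‖ / 2) :
    angle a b ≤ Real.pi / 6 := by
  have hb₀ : 0 < ‖b‖ := norm_pos_iff.2 hb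
  have hinner : ‖a - b‖ ^ 2 = ‖a‖ ^ 2 - 2 * ⟪a, b⟫ + ‖b‖ ^ 2 := norm_sub_sq_real a b
  have hcos : √3 / 2 ≤ Real.cos (angle a b) := by
    have ha₀ : 0 < ‖a‖ := by
      have := norm_sub_norm_le b a
      rw [norm_sub_rev] at this
      linarith
    rw [cos_angle, le_div_iff₀ (by positivity)]
    -- AM-GM: `√3 ‖a‖ ‖b‖ ≤ ‖a‖ ^ 2 + 3 / 4 ‖b‖ ^ 2`
    nlinarith [sq_nonneg (‖a‖ - √3 / 2 * ‖b‖), Real.sq_sqrt (zero_le_three (α := ℝ)),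
      pow_le_pow_left₀ (norm_nonneg _) hab 2]
  rw [← Real.cos_pi_div_six] at hcos
  by_contra! hlt
  exact (Real.cos_lt_cos_of_nonneg_of_le_pi (by positivity) (angle_le_pi a b) hlt).not_ge hcos

end Angle

theorem deriv_periodic {F : Type*} [NormedAddCommGroup F] [NormedSpace ℝ F] {f : ℝ → F} {T : ℝ}
    (hf : Function.Periodic f T) : Function.Periodic (deriv f) T := fun x => by
  rw [← deriv_comp_add_const, hf.funext]

section TangentPoint

variable {E : Type*} [NormedAddCommGroup E] [InnerProductSpace ℝ E] {u : ℝ → E}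

/-- The `q`-th root of the integrand of the tangent-point functional. In terms of the angle between
the tangent and the chord, `|u'(y) ∧ (u(x) - u(y))| / |u(x) - u(y)|²` makes sense in every real
inner product space. -/
def tangentPointKernel (u : ℝ → E) (z : ℝ × ℝ) : ℝ :=
  ‖deriv u z.2‖ * Real.sin (angle (deriv u z.2) (u z.1 - u z.2)) / ‖u z.1 - u z.2‖

/-- The tangent-point functional of a curve of period `1` in a real inner product space. -/
def tangentPointEnergy (q : ℝ) (u : ℝ → E) : ℝ≥0∞ :=
  ENNReal.ofReal (1 / q) * ∫⁻ z in unitSq, ENNReal.ofReal (tangentPointKernel u z) ^ q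

theorem tangentPointKernel_nonneg (u : ℝ → E) (z : ℝ × ℝ) : 0 ≤ tangentPointKernel u z :=
  div_nonneg (mul_nonneg (norm_nonneg _) (sin_angle_nonneg _ _)) (norm_nonneg _)

theorem wedgeSq_eq_sin_angle_sq {n : ℕ} (a b : EuclideanSpace ℝ (Fin n)) :
    wedgeSq a b = (‖a‖ * Real.sin (angle a b) * ‖b‖) ^ 2 := by
  rw [wedgeSq, ← cos_angle_mul_norm_mul_norm]
  linear_combination -(‖a‖ ^ 2 * ‖b‖ ^ 2) * Real.sin_sq_add_cos_sq (angle a b)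

theorem TPe_eq_tangentPointEnergy {n : ℕ} {q : ℝ} (hq : 0 < q) (u : ℝ → EuclideanSpace ℝ (Fin n)) :
    TPe q u = tangentPointEnergy q u := by
  rw [TPe, tangentPointEnergy]
  congr 1
  refine lintegral_congr fun z => ?_
  have hsin := sin_angle_nonneg (deriv u z.2) (u z.1 - u z.2)
  rw [ENNReal.ofReal_rpow_of_nonneg (tangentPointKernel_nonneg u z) hq.le, wedgeSq_eq_sin_angle_sq,
    ← Real.rpow_natCast, ← Real.rpow_mul (by positivity), Nat.cast_ofNat,
    mul_div_cancel₀ q two_ne_zero, two_mul, Real.rpow_add_of_nonneg (norm_nonneg _) hq.le hq.le,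
    Real.mul_rpow (by positivity) (norm_nonneg _), tangentPointKernel,
    Real.div_rpow (by positivity) (norm_nonneg _)]
  obtain h | h := eq_or_ne ‖u z.1 - u z.2‖ 0
  · simp [h, Real.zero_rpow hq.ne']
  · have := (Real.rpow_ne_zero (norm_nonneg (u z.1 - u z.2)) hq.ne').2 h
    field_simp

theorem measurable_tangentPointKernel (hu : ContDiff ℝ 1 u) :
    Measurable (tangentPointKernel u) := by
  have htangent : Continuous fun z : ℝ × ℝ => deriv u z.2 :=
    (hu.continuous_deriv le_rfl).comp continuous_snd
  have hchord : Continuous fun z : ℝ × ℝ => u z.1 - u z.2 :=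
    (hu.continuous.comp continuous_fst).sub (hu.continuous.comp continuous_snd)
  have hangle : Measurable fun z : ℝ × ℝ => angle (deriv u z.2) (u z.1 - u z.2) :=
    Real.continuous_arccos.measurable.comp
      ((htangent.inner hchord).measurable.div (htangent.norm.mul hchord.norm).measurable)
  exact (htangent.norm.measurable.mul (Real.measurable_sin.comp hangle)).div
    hchord.norm.measurable

theorem setLIntegral_tangentPointKernel_le {q M : ℝ} (hq : 0 < q) (hu : ContDiff ℝ 1 u)
    (hper : Function.Periodic u 1) (hTP : tangentPointEnergy q u ≤ ENNReal.ofReal M) (a b : ℝ) :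
    ∫⁻ z in Ioc a (a + 1) ×ˢ Ioc b (b + 1), ENNReal.ofReal (tangentPointKernel u z) ^ q ≤
      ENNReal.ofReal (q * M) := by
  have hmeas : Measurable fun z => ENNReal.ofReal (tangentPointKernel u z) ^ q :=
    (measurable_tangentPointKernel hu).ennreal_ofReal.pow_const q
  rw [setLIntegral_Ioc_prod_Ioc_add_eq_of_periodic one_pos hmeas
    (fun y x => by simp only [tangentPointKernel, hper x])
    (fun x y => by simp only [tangentPointKernel, hper y, deriv_periodic hper y]) a b 0 0, zero_add]
  calc ∫⁻ z in unitSq, ENNReal.ofReal (tangentPointKernel u z) ^ q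
      = ENNReal.ofReal q * tangentPointEnergy q u := by
        rw [tangentPointEnergy, ← mul_assoc, ← ENNReal.ofReal_mul hq.le,
          mul_one_div_cancel hq.ne', ENNReal.ofReal_one, one_mul]
    _ ≤ ENNReal.ofReal (q * M) := by
        rw [ENNReal.ofReal_mul hq.le]
        gcongr

theorem norm_sub_le_of_norm_deriv_le {F : Type*} [NormedAddCommGroup F] [NormedSpace ℝ F]
    {f : ℝ → F} {C : ℝ} (hf : Differentiable ℝ f) (hC : ∀ x, ‖deriv f x‖ ≤ C) (x y : ℝ) :
    ‖f x - f y‖ ≤ C * |x - y| :=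
  convex_univ.norm_image_sub_le_of_norm_deriv_le (fun x _ => hf x) (fun x _ => hC x) (mem_univ y)
    (mem_univ x)

theorem sin_angle_deriv_le_tangentPointKernel {lam Λ s t : ℝ} (hlam : 0 < lam)
    (hlow : lam ≤ ‖deriv u t‖) (hup : ‖u s - u t‖ ≤ Λ * |s - t|) (hst : u s ≠ u t) :
    Real.sin (angle (deriv u t) (u s - u t)) ≤
      Λ / lam * |s - t| * tangentPointKernel u (s, t) := by
  have hchord : 0 < ‖u s - u t‖ := norm_pos_iff.2 (sub_ne_zero.2 hst)
  have htangent : 0 < ‖deriv u t‖ := hlam.trans_le hlow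
  calc Real.sin (angle (deriv u t) (u s - u t))
      = ‖u s - u t‖ / ‖deriv u t‖ * tangentPointKernel u (s, t) := by
        rw [tangentPointKernel]
        field_simp
    _ ≤ Λ * |s - t| / lam * tangentPointKernel u (s, t) := by
        have hK := tangentPointKernel_nonneg u (s, t)
        have hΛ : 0 ≤ Λ * |s - t| := hchord.le.trans hup
        gcongr
    _ = Λ / lam * |s - t| * tangentPointKernel u (s, t) := by ring

theorem abs_cos_angle_deriv_sq_sub_le {lam Λ s t : ℝ} (hlam : 0 < lam)
    (hlow : ∀ x, lam ≤ ‖deriv u x‖) (hup : ∀ x y, ‖u x - u y‖ ≤ Λ * |x - y|)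
    (hst : u s ≠ u t) (e : E) :
    |Real.cos (angle (deriv u s) e) ^ 2 - Real.cos (angle (deriv u t) e) ^ 2| ≤
      Λ / lam * |s - t| * (tangentPointKernel u (s, t) + tangentPointKernel u (t, s)) := by
  have hs := abs_cos_angle_sq_sub_cos_angle_sq_le_sin_angle (deriv u s) (u t - u s) e
  have ht := abs_cos_angle_sq_sub_cos_angle_sq_le_sin_angle (deriv u t) (u t - u s) e
  have hsK := sin_angle_deriv_le_tangentPointKernel hlam (hlow s) (hup t s) hst.symm
  have htK := sin_angle_deriv_le_tangentPointKernel hlam (hlow t) (hup s t) hst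
  rw [abs_sub_comm] at ht
  rw [abs_sub_comm t s] at hsK
  rw [← neg_sub, angle_neg_right, Real.sin_pi_sub] at htK
  calc _ ≤ _ := abs_sub_le _ (Real.cos (angle (u t - u s) e) ^ 2) _
    _ ≤ _ := by linarith

theorem setLIntegral_add_swap_rpow_le {q : ℝ} (hq : 1 ≤ q) {K : ℝ × ℝ → ℝ≥0∞}
    (hK : Measurable K) (I : Set ℝ) :
    ∫⁻ z in I ×ˢ I, (K z + K z.swap) ^ q ≤ 2 ^ q * ∫⁻ z in I ×ˢ I, K z ^ q := by
  have hswap : ∫⁻ z in I ×ˢ I, K z.swap ^ q = ∫⁻ z in I ×ˢ I, K z ^ q := by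
    simpa [preimage_swap_prod, Measure.volume_eq_prod] using
      (Measure.measurePreserving_swap (μ := volume) (ν := volume)).setLIntegral_comp_preimage_emb
        MeasurableEquiv.prodComm.measurableEmbedding (fun z => K z ^ q) (I ×ˢ I)
  calc ∫⁻ z in I ×ˢ I, (K z + K z.swap) ^ q
      ≤ ∫⁻ z in I ×ˢ I, 2 ^ (q - 1) * (K z ^ q + K z.swap ^ q) :=
        lintegral_mono fun z => ENNReal.rpow_add_le_mul_rpow_add_rpow _ _ hq
    _ = 2 ^ (q - 1) * (2 * ∫⁻ z in I ×ˢ I, K z ^ q) := by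
        rw [lintegral_const_mul' _ _ (by simp), lintegral_add_left (hK.pow_const q), hswap, two_mul]
    _ = 2 ^ q * ∫⁻ z in I ×ˢ I, K z ^ q := by
        rw [← mul_assoc, ENNReal.rpow_sub _ _ two_ne_zero ENNReal.ofNat_ne_top, ENNReal.rpow_one,
          ENNReal.div_mul_cancel two_ne_zero ENNReal.ofNat_ne_top]

theorem enorm_cos_angle_deriv_sq_sub_rpow_div_le {q lam Λ s t : ℝ} (hq : 0 < q) (hlam : 0 < lam)
    (hΛ : 0 ≤ Λ) (hlow : ∀ x, lam ≤ ‖deriv u x‖) (hup : ∀ x y, ‖u x - u y‖ ≤ Λ * |x - y|)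
    (hst : u s = u t → s = t) (e : E) :
    ‖Real.cos (angle (deriv u s) e) ^ 2 - Real.cos (angle (deriv u t) e) ^ 2‖ₑ ^ q /
        edist s t ^ q ≤
      ENNReal.ofReal (Λ / lam) ^ q * (ENNReal.ofReal (tangentPointKernel u (s, t)) +
        ENNReal.ofReal (tangentPointKernel u (t, s))) ^ q := by
  obtain rfl | hne := eq_or_ne s t
  · simp [hq]
  rw [← ENNReal.mul_rpow_of_nonneg _ _ hq.le, ← ENNReal.div_rpow_of_nonneg _ _ hq.le]
  gcongr
  rw [ENNReal.div_le_iff (by simpa [edist_eq_zero] using hne) (edist_ne_top _ _), edist_dist,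
    Real.dist_eq, ← ENNReal.ofReal_add (tangentPointKernel_nonneg _ _)
      (tangentPointKernel_nonneg _ _), ← ENNReal.ofReal_mul (by positivity),
    ← ENNReal.ofReal_mul, Real.enorm_eq_ofReal_abs]
  · refine ENNReal.ofReal_le_ofReal
      ((abs_cos_angle_deriv_sq_sub_le hlam hlow hup (hne ∘ hst) e).trans_eq ?_)
    ring
  · have := tangentPointKernel_nonneg u (s, t)
    have := tangentPointKernel_nonneg u (t, s)
    positivity

theorem gagliardoPow_cos_angle_deriv_sq_le {q lam Λ M : ℝ} (hq : 1 ≤ q) (hlam : 0 < lam)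
    (hΛ : 0 ≤ Λ) (hu : ContDiff ℝ 1 u) (hper : Function.Periodic u 1)
    (hlow : ∀ x, lam ≤ ‖deriv u x‖) (hup : ∀ x y, ‖u x - u y‖ ≤ Λ * |x - y|)
    (hTP : tangentPointEnergy q u ≤ ENNReal.ofReal M) {a : ℝ} (hinj : InjOn u (Ioc a (a + 1)))
    (e : E) :
    gagliardoPow (1 - 1 / q) q (fun x => Real.cos (angle (deriv u x) e) ^ 2) (Ioc a (a + 1)) ≤
      ENNReal.ofReal ((2 * Λ / lam) ^ q * (q * M)) := by
  have hq₀ : 0 < q := zero_lt_one.trans_le hq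
  have hK : Measurable fun z => ENNReal.ofReal (tangentPointKernel u z) :=
    (measurable_tangentPointKernel hu).ennreal_ofReal
  rw [gagliardoPow, show 1 + (1 - 1 / q) * q = q by field_simp; ring]
  calc _ ≤ ∫⁻ z in Ioc a (a + 1) ×ˢ Ioc a (a + 1), ENNReal.ofReal (Λ / lam) ^ q *
        (ENNReal.ofReal (tangentPointKernel u z) +
          ENNReal.ofReal (tangentPointKernel u z.swap)) ^ q :=
        setLIntegral_mono' (measurableSet_Ioc.prod measurableSet_Ioc) fun z hz =>
          enorm_cos_angle_deriv_sq_sub_rpow_div_le hq₀ hlam hΛ hlow hup (hinj hz.1 hz.2) e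
    _ ≤ ENNReal.ofReal (Λ / lam) ^ q * (2 ^ q * ENNReal.ofReal (q * M)) := by
        rw [lintegral_const_mul' _ _ (ENNReal.rpow_ne_top_of_nonneg hq₀.le ENNReal.ofReal_ne_top)]
        gcongr
        refine (setLIntegral_add_swap_rpow_le hq hK _).trans ?_
        gcongr
        exact setLIntegral_tangentPointKernel_le hq₀ hu hper hTP a a
    _ = ENNReal.ofReal ((2 * Λ / lam) ^ q * (q * M)) := by
        rw [← mul_assoc, ← ENNReal.mul_rpow_of_nonneg _ _ hq₀.le, ← ENNReal.ofReal_ofNat 2,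
          ← ENNReal.ofReal_mul (by positivity),
          ENNReal.ofReal_rpow_of_nonneg (by positivity) hq₀.le,
          ← ENNReal.ofReal_mul (by positivity), mul_comm (Λ / lam), mul_div_assoc]

end TangentPoint

section Real

theorem exists_pos_forall_mul_rpow_lt {β κ : ℝ} (hβ : 0 < β) (hκ : 0 < κ) (C : ℝ) :
    ∃ ε : ℝ, 0 < ε ∧ ∀ d, 0 ≤ d → d < ε → C * d ^ β < κ := by
  have hcont : Continuous fun d : ℝ => C * d ^ β :=
    continuous_const.mul (Real.continuous_rpow_const hβ.le)
  have hlim : Tendsto (fun d : ℝ => C * d ^ β) (𝓝 0) (𝓝 0) := by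
    simpa [Real.zero_rpow hβ.ne'] using hcont.tendsto 0
  obtain ⟨ε, hε, hball⟩ := Metric.eventually_nhds_iff.1 (hlim.eventually (gt_mem_nhds hκ))
  exact ⟨ε, hε, fun d hd₀ hd => hball (by rwa [Real.dist_0_eq_abs, abs_of_nonneg hd₀])⟩

theorem le_of_sin_le_sin_of_continuousOn {f : ℝ → ℝ} {c x y : ℝ} (hc₀ : 0 ≤ c)
    (hc : c < Real.pi / 2) (hf : ContinuousOn f (uIcc y x)) (hy : f y = 0)
    (hsin : ∀ t ∈ uIcc y x, Real.sin (f t) ≤ Real.sin c) : f x ≤ c := by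
  by_contra! hlt
  have hmem : min (f x) (Real.pi / 2) ∈ uIcc (f y) (f x) := by
    rw [hy]
    exact mem_uIcc_of_le (le_min (hc₀.trans hlt.le) (by positivity)) (min_le_left _ _)
  obtain ⟨t, ht, hft⟩ := intermediate_value_uIcc hf hmem
  have hgt : Real.sin c < Real.sin (f t) := by
    rw [hft]
    exact Real.sin_lt_sin_of_lt_of_le_pi_div_two (by linarith) (min_le_right _ _)
      (lt_min hlt hc)
  exact (hsin t ht).not_gt hgt

end Real

section Curve

variable {E : Type*} [NormedAddCommGroup E] [InnerProductSpace ℝ E] {u : ℝ → E}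

/-- The constant in the Hölder estimate for the tangent direction of a curve with
`lam ≤ |u'| ≤ Λ` and tangent-point energy at most `M`. -/
def tangentHolderConst (q lam Λ M : ℝ) : ℝ :=
  morreyConst (1 - 1 / q) q * ((2 * Λ / lam) ^ q * (q * M)) ^ (1 / q)

theorem continuous_angle_deriv (hu : ContDiff ℝ 1 u) (hne : ∀ t, deriv u t ≠ 0) {e : E}
    (he : e ≠ 0) : Continuous fun t => angle (deriv u t) e :=
  continuous_iff_continuousAt.2 fun t =>
    (continuousAt_angle (x := (deriv u t, e)) (hne t) he).comp (f := fun t => (deriv u t, e))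
      ((hu.continuous_deriv le_rfl).prodMk continuous_const).continuousAt

theorem sin_angle_deriv_sq_le {q lam Λ M : ℝ} (hq : 2 < q) (hlam : 0 < lam) (hΛ : 0 ≤ Λ)
    (hM : 0 ≤ M) (hu : ContDiff ℝ 1 u) (hper : Function.Periodic u 1)
    (hinj : ∀ a, InjOn u (Ioc a (a + 1))) (hlow : ∀ x, lam ≤ ‖deriv u x‖)
    (hup : ∀ x y, ‖u x - u y‖ ≤ Λ * |x - y|) (hTP : tangentPointEnergy q u ≤ ENNReal.ofReal M)
    {x y : ℝ} (hxy : |x - y| ≤ 1) :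
    Real.sin (angle (deriv u x) (deriv u y)) ^ 2 ≤
      tangentHolderConst q lam Λ M * |x - y| ^ (1 - 2 / q) := by
  have hne (t : ℝ) : deriv u t ≠ 0 := norm_pos_iff.1 (hlam.trans_le (hlow t))
  have hcont : Continuous fun t => Real.cos (angle (deriv u t) (deriv u y)) ^ 2 :=
    (Real.continuous_cos.comp (continuous_angle_deriv hu hne (hne y))).pow 2
  have hsub : uIoc x y ⊆ Ioc (min x y) (min x y + 1) := by
    refine Ioc_subset_Ioc_right ?_
    rw [← max_sub_min_eq_abs'] at hxy
    linarith
  have hmorrey := norm_sub_le_of_gagliardoPow_le (s := 1 - 1 / q) (x := x) (y := y)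
    (by linarith) (by rw [lt_sub_iff_add_lt, ← add_div, div_lt_one] <;> linarith) hcont hsub
    (by positivity) (gagliardoPow_cos_angle_deriv_sq_le (by linarith) hlam hΛ hu hper hlow hup hTP
      (hinj _) (deriv u y))
  rw [angle_self (hne y), Real.cos_zero, one_pow, Real.norm_eq_abs, abs_sub_comm,
    ← Real.sin_sq, abs_sq, show 1 - 1 / q - 1 / q = 1 - 2 / q by ring] at hmorrey
  exact hmorrey

theorem angle_deriv_le_pi_div_six {δ : ℝ} (hu : ContDiff ℝ 1 u) (hne : ∀ x, deriv u x ≠ 0)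
    (hsin : ∀ x y, |x - y| ≤ δ → Real.sin (angle (deriv u x) (deriv u y)) ^ 2 ≤ 1 / 4)
    {x y : ℝ} (hxy : |x - y| ≤ δ) : angle (deriv u x) (deriv u y) ≤ Real.pi / 6 := by
  refine le_of_sin_le_sin_of_continuousOn (f := fun t => angle (deriv u t) (deriv u y))
    (by positivity) (by linarith [Real.pi_pos])
    (continuous_angle_deriv hu hne (hne y)).continuousOn (angle_self (hne y)) fun t ht => ?_
  rw [Real.sin_pi_div_six]
  refine abs_le_of_sq_le_sq' ?_ (by norm_num) |>.2
  exact (hsin t y ((abs_sub_left_of_mem_uIcc ht).trans hxy)).trans_eq (by norm_num)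

theorem mul_abs_sub_le_norm_sub_of_angle_deriv_le {lam x y : ℝ} {e : E} (he : e ≠ 0)
    (hu : Differentiable ℝ u) (hlow : ∀ t, lam ≤ ‖deriv u t‖)
    (hangle : ∀ t ∈ uIcc x y, angle (deriv u t) e ≤ Real.pi / 3) :
    lam / 2 * |x - y| ≤ ‖u x - u y‖ := by
  wlog hxy : x ≤ y generalizing x y
  · rw [abs_sub_comm, norm_sub_rev]
    exact this (by rwa [uIcc_comm]) (le_of_not_ge hxy)
  have he₀ : 0 < ‖e‖ := norm_pos_iff.2 he
  have hderiv (t : ℝ) : HasDerivAt (fun t => ⟪u t, e⟫) ⟪deriv u t, e⟫ t := by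
    simpa using (hu t).hasDerivAt.inner ℝ (hasDerivAt_const t e)
  have hinner (t : ℝ) (ht : t ∈ uIcc x y) : lam / 2 * ‖e‖ ≤ ⟪deriv u t, e⟫ := by
    have hcos : 1 / 2 ≤ Real.cos (angle (deriv u t) e) := by
      rw [← Real.cos_pi_div_three]
      exact Real.cos_le_cos_of_nonneg_of_le_pi (angle_nonneg _ _) (by linarith [Real.pi_pos])
        (hangle t ht)
    calc lam / 2 * ‖e‖ ≤ ‖deriv u t‖ / 2 * ‖e‖ := by
          gcongr
          exact hlow t
      _ = 1 / 2 * (‖deriv u t‖ * ‖e‖) := by ring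
      _ ≤ Real.cos (angle (deriv u t) e) * (‖deriv u t‖ * ‖e‖) := by gcongr
      _ = ⟪deriv u t, e⟫ := cos_angle_mul_norm_mul_norm _ _
  have hmean : lam / 2 * ‖e‖ * (y - x) ≤ ⟪u y, e⟫ - ⟪u x, e⟫ := by
    refine (convex_Icc x y).mul_sub_le_image_sub_of_le_deriv
      (fun t _ => (hderiv t).continuousAt.continuousWithinAt)
      (fun t _ => (hderiv t).differentiableAt.differentiableWithinAt) (fun t ht => ?_)
      x (left_mem_Icc.2 hxy) y (right_mem_Icc.2 hxy) hxy
    rw [(hderiv t).deriv]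
    exact hinner t (Icc_subset_uIcc (interior_subset ht))
  refine le_of_mul_le_mul_right ?_ he₀
  calc lam / 2 * |x - y| * ‖e‖ = lam / 2 * ‖e‖ * (y - x) := by
        rw [abs_sub_comm, abs_of_nonneg (sub_nonneg.2 hxy)]
        ring
    _ ≤ ⟪u y - u x, e⟫ := by rwa [inner_sub_left]
    _ ≤ ‖u x - u y‖ * ‖e‖ := norm_sub_rev (u x) _ ▸ real_inner_le_norm _ _

theorem half_le_sin_angle_of_angle_le {a a' w w' : E} (haw : angle a w = Real.pi / 2)
    (ha : angle a' a ≤ Real.pi / 6) (hw : angle w' w ≤ Real.pi / 6) :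
    1 / 2 ≤ Real.sin (angle a' w') := by
  have hlower : Real.pi / 6 ≤ angle a' w' := by
    have := angle_le_angle_add_angle a a' w
    have := angle_le_angle_add_angle a' w' w
    rw [angle_comm a a'] at *
    linarith
  have hupper : angle a' w' ≤ Real.pi - Real.pi / 6 := by
    have := angle_le_angle_add_angle a' a w'
    have := angle_le_angle_add_angle a w w'
    rw [angle_comm w w'] at *
    linarith
  rw [← Real.sin_pi_div_six]
  obtain h | h := le_total (angle a' w') (Real.pi / 2)
  · exact Real.sin_le_sin_of_le_of_le_pi_div_two (by linarith [Real.pi_pos]) h hlower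
  · rw [← Real.sin_pi_sub (angle a' w')]
    exact Real.sin_le_sin_of_le_of_le_pi_div_two (by linarith [Real.pi_pos]) (by linarith)
      (by linarith)

theorem div_le_tangentPointKernel_of_inner_eq_zero {lam Λ δ h x y s t : ℝ}
    (hlow : ∀ x, lam ≤ ‖deriv u x‖) (hup : ∀ x y, ‖u x - u y‖ ≤ Λ * |x - y|)
    (hangle : ∀ x y, |x - y| ≤ δ → angle (deriv u x) (deriv u y) ≤ Real.pi / 6)
    (hne : u x ≠ u y) (hperp : ⟪deriv u y, u x - u y⟫ = 0) (hhδ : h ≤ δ)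
    (hh : 4 * Λ * h ≤ ‖u x - u y‖) (hΛ : 0 ≤ Λ) (hs : |s - x| ≤ h) (ht : |t - y| ≤ h) :
    lam / (3 * ‖u x - u y‖) ≤ tangentPointKernel u (s, t) := by
  have hchord₀ : 0 < ‖u x - u y‖ := norm_pos_iff.2 (sub_ne_zero.2 hne)
  have hdiff : ‖(u s - u t) - (u x - u y)‖ ≤ ‖u x - u y‖ / 2 := by
    rw [sub_sub_sub_comm]
    calc ‖(u s - u x) - (u t - u y)‖ ≤ ‖u s - u x‖ + ‖u t - u y‖ := norm_sub_le _ _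
      _ ≤ Λ * h + Λ * h := by
        gcongr
        · exact (hup s x).trans (by gcongr)
        · exact (hup t y).trans (by gcongr)
      _ ≤ ‖u x - u y‖ / 2 := by linarith
  have hsin : 1 / 2 ≤ Real.sin (angle (deriv u t) (u s - u t)) :=
    half_le_sin_angle_of_angle_le (inner_eq_zero_iff_angle_eq_pi_div_two _ _ |>.1 hperp)
      (hangle t y (ht.trans hhδ)) (angle_le_pi_div_six_of_norm_sub_le (sub_ne_zero.2 hne) hdiff)
  have hchord : ‖u s - u t‖ ≤ 3 / 2 * ‖u x - u y‖ := by
    linarith [norm_sub_norm_le (u s - u t) (u x - u y)]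
  have hchord' : 0 < ‖u s - u t‖ := by
    have := norm_sub_norm_le (u x - u y) (u s - u t)
    rw [norm_sub_rev (u x - u y)] at this
    linarith
  calc lam / (3 * ‖u x - u y‖) = lam * (1 / 2) / (3 / 2 * ‖u x - u y‖) := by ring
    _ ≤ tangentPointKernel u (s, t) := by
      have := hlow t
      rw [tangentPointKernel]
      gcongr

theorem div_rpow_mul_sq_le_of_inner_eq_zero {q lam Λ M δ h x y : ℝ} (hq : 0 < q) (hlam : 0 < lam)
    (hΛ : 0 ≤ Λ) (hM : 0 ≤ M) (hu : ContDiff ℝ 1 u) (hper : Function.Periodic u 1)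
    (hlow : ∀ x, lam ≤ ‖deriv u x‖) (hup : ∀ x y, ‖u x - u y‖ ≤ Λ * |x - y|)
    (hTP : tangentPointEnergy q u ≤ ENNReal.ofReal M)
    (hangle : ∀ x y, |x - y| ≤ δ → angle (deriv u x) (deriv u y) ≤ Real.pi / 6)
    (hne : u x ≠ u y) (hperp : ⟪deriv u y, u x - u y⟫ = 0) (hh₀ : 0 ≤ h) (hh₁ : h ≤ 1)
    (hhδ : h ≤ δ) (hh : 4 * Λ * h ≤ ‖u x - u y‖) :
    (lam / (3 * ‖u x - u y‖)) ^ q * h ^ 2 ≤ q * M := by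
  have hsq : Ioc x (x + h) ×ˢ Ioc y (y + h) ⊆ Ioc x (x + 1) ×ˢ Ioc y (y + 1) :=
    prod_mono (Ioc_subset_Ioc_right (by linarith)) (Ioc_subset_Ioc_right (by linarith))
  have hnear {a s : ℝ} (hs : s ∈ Ioc a (a + h)) : |s - a| ≤ h := by
    rw [abs_of_pos (by linarith [hs.1])]
    linarith [hs.2]
  rw [← ENNReal.ofReal_le_ofReal_iff (by positivity)]
  calc ENNReal.ofReal ((lam / (3 * ‖u x - u y‖)) ^ q * h ^ 2)
      = ∫⁻ _ in Ioc x (x + h) ×ˢ Ioc y (y + h), ENNReal.ofReal (lam / (3 * ‖u x - u y‖)) ^ q := by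
        rw [setLIntegral_const, Measure.volume_eq_prod, Measure.prod_prod, Real.volume_Ioc,
          Real.volume_Ioc, add_sub_cancel_left, add_sub_cancel_left,
          ENNReal.ofReal_mul (by positivity), sq, ENNReal.ofReal_mul hh₀,
          ENNReal.ofReal_rpow_of_nonneg (by positivity) hq.le]
    _ ≤ ∫⁻ z in Ioc x (x + h) ×ˢ Ioc y (y + h), ENNReal.ofReal (tangentPointKernel u z) ^ q := by
        refine setLIntegral_mono' (measurableSet_Ioc.prod measurableSet_Ioc) fun z hz => ?_
        gcongr
        exact div_le_tangentPointKernel_of_inner_eq_zero hlow hup hangle hne hperp hhδ hh hΛ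
          (hnear hz.1) (hnear hz.2)
    _ ≤ ENNReal.ofReal (q * M) :=
        (lintegral_mono_set hsq).trans (setLIntegral_tangentPointKernel_le hq hu hper hTP x y)

theorem le_norm_sub_of_inner_eq_zero {q lam Λ M δ ε x y : ℝ} (hq : 0 < q) (hlam : 0 < lam)
    (hΛ : 0 < Λ) (hM : 0 ≤ M) (hu : ContDiff ℝ 1 u) (hper : Function.Periodic u 1)
    (hlow : ∀ x, lam ≤ ‖deriv u x‖) (hup : ∀ x y, ‖u x - u y‖ ≤ Λ * |x - y|)
    (hTP : tangentPointEnergy q u ≤ ENNReal.ofReal M)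
    (hangle : ∀ x y, |x - y| ≤ δ → angle (deriv u x) (deriv u y) ≤ Real.pi / 6) (hδ₁ : δ ≤ 1)
    (hεδ : ε ≤ 4 * Λ * δ)
    (hε : ∀ d, 0 ≤ d → d < ε → 16 * Λ ^ 2 * (q * M) * (3 / lam) ^ q * d ^ (q - 2) < 1)
    (hne : u x ≠ u y) (hperp : ⟪deriv u y, u x - u y⟫ = 0) : ε ≤ ‖u x - u y‖ := by
  by_contra! hlt
  have hd : 0 < ‖u x - u y‖ := norm_pos_iff.2 (sub_ne_zero.2 hne)
  have hhδ : ‖u x - u y‖ / (4 * Λ) ≤ δ := by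
    rw [div_le_iff₀ (by positivity)]
    linarith
  have henergy := div_rpow_mul_sq_le_of_inner_eq_zero hq hlam hΛ.le hM hu hper hlow hup hTP hangle
    hne hperp (by positivity) (hhδ.trans hδ₁) hhδ (mul_div_cancel₀ _ (by positivity)).le
  set d := ‖u x - u y‖
  refine (hε d hd.le hlt).not_ge ?_
  -- On squares of side `d / (4 * Λ)`, `henergy` bounds `d ^ (q - 2)` from below.
  calc (1 : ℝ) = 16 * Λ ^ 2 * ((lam / (3 * d)) ^ q * (d / (4 * Λ)) ^ 2) * (3 / lam) ^ q *
        d ^ (q - 2) := by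
        rw [Real.div_rpow hlam.le (by positivity), Real.mul_rpow zero_le_three hd.le,
          Real.div_rpow zero_le_three hlam.le, Real.rpow_sub hd, Real.rpow_two]
        field_simp
        norm_num
    _ ≤ 16 * Λ ^ 2 * (q * M) * (3 / lam) ^ q * d ^ (q - 2) := by gcongr

end Curve

section Circle

theorem exists_int_abs_sub_eq_circDist (x y : ℝ) : ∃ m : ℤ, |x - (y + m)| = circDist x y :=
  ⟨round (x - y), by rw [circDist, UnitAddCircle.norm_eq, sub_add_eq_sub_sub]⟩

theorem circDist_le_half (x y : ℝ) : circDist x y ≤ 1 / 2 := by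
  rw [circDist, UnitAddCircle.norm_eq]
  exact abs_sub_round _

theorem injOn_Ioc_of_coe_addCircle_eq {α : Type*} {T : ℝ} [Fact (0 < T)] {f : ℝ → α}
    (hf : ∀ x y, f x = f y → (x : AddCircle T) = y) (a : ℝ) : InjOn f (Ioc a (a + T)) :=
  fun _ hx _ hy hxy => (AddCircle.coe_eq_coe_iff_of_mem_Ioc hx hy).1 (hf _ _ hxy)

theorem norm_sub_le_mul_circDist {F : Type*} [NormedAddCommGroup F] {f : ℝ → F} {C : ℝ}
    (hper : Function.Periodic f 1) (hf : ∀ x y, ‖f x - f y‖ ≤ C * |x - y|) (x y : ℝ) :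
    ‖f x - f y‖ ≤ C * circDist x y := by
  obtain ⟨m, hm⟩ := exists_int_abs_sub_eq_circDist x y
  have hfm : f (y + m) = f y := by simpa using hper.int_mul m y
  simpa only [hfm, hm] using hf x (y + m)

end Circle

section Curve

variable {E : Type*} [NormedAddCommGroup E] [InnerProductSpace ℝ E] {u : ℝ → E}

theorem inner_deriv_eq_zero_of_isLocalMin_norm_sub {a : E} {z : ℝ} (hu : DifferentiableAt ℝ u z)
    (hmin : IsLocalMin (fun t => ‖a - u t‖) z) : ⟪deriv u z, a - u z⟫ = 0 := by
  have hsq : IsLocalMin (fun t => ‖a - u t‖ ^ 2) z := by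
    filter_upwards [hmin] with t ht
    gcongr
  have := hsq.hasDerivAt_eq_zero (hu.hasDerivAt.const_sub a).norm_sq
  rw [inner_neg_right, real_inner_comm] at this
  linarith

theorem min_le_norm_sub_of_mem_Icc {c δ ε x y : ℝ} (hδ : 0 < δ) (hu : Differentiable ℝ u)
    (hper : Function.Periodic u 1) (hinj : ∀ a, InjOn u (Ioc a (a + 1)))
    (hloc : ∀ x y, |x - y| ≤ δ → c * |x - y| ≤ ‖u x - u y‖)
    (hperp : ∀ x y, u x ≠ u y → ⟪deriv u y, u x - u y⟫ = 0 → ε ≤ ‖u x - u y‖)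
    (hy : y ∈ Icc (x + δ) (x + 1 - δ)) : min (c * δ) ε ≤ ‖u x - u y‖ := by
  obtain ⟨z, hz, hmin⟩ := isCompact_Icc.exists_isMinOn ⟨y, hy⟩
    (continuous_const.sub hu.continuous).norm.continuousOn (f := fun z => ‖u x - u z‖)
  refine le_trans ?_ (hmin hy)
  have hend {t : ℝ} (ht : |x - t| = δ) : min (c * δ) ε ≤ ‖u x - u t‖ :=
    (min_le_left _ _).trans (ht ▸ hloc x t ht.le)
  obtain rfl | hleft := hz.1.eq_or_lt
  · exact hend (by simp [hδ.le])
  obtain rfl | hright := hz.2.eq_or_lt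
  · have hzδ : u (x + 1 - δ) = u (x - δ) := by rw [add_sub_right_comm, hper]
    exact (hend (t := x - δ) (by simp [hδ.le])).trans_eq (by simp only [hzδ])
  have hxz : u x ≠ u z := fun h => by
    have := hinj (x - δ) ⟨by linarith, by linarith [hz.1]⟩ ⟨by linarith, by linarith⟩ h
    linarith
  exact (min_le_right _ _).trans (hperp x z hxz (inner_deriv_eq_zero_of_isLocalMin_norm_sub (hu z)
    (hmin.isLocalMin (Icc_mem_nhds hleft hright))))

theorem mul_circDist_le_norm_sub {c δ ε : ℝ} (hc : 0 ≤ c) (hδ : 0 < δ) (hε : 0 ≤ ε)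
    (hu : Differentiable ℝ u) (hper : Function.Periodic u 1)
    (hinj : ∀ a, InjOn u (Ioc a (a + 1)))
    (hloc : ∀ x y, |x - y| ≤ δ → c * |x - y| ≤ ‖u x - u y‖)
    (hperp : ∀ x y, u x ≠ u y → ⟪deriv u y, u x - u y⟫ = 0 → ε ≤ ‖u x - u y‖) (x y : ℝ) :
    min c (min (c * δ) ε) * circDist x y ≤ ‖u x - u y‖ := by
  have hdist₀ : 0 ≤ circDist x y := norm_nonneg _
  have hhalf := circDist_le_half x y
  obtain ⟨m, hm⟩ := exists_int_abs_sub_eq_circDist x y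
  have hum : u (y + m) = u y := by simpa using hper.int_mul m y
  obtain hnear | hfar := le_total (circDist x y) δ
  · calc min c (min (c * δ) ε) * circDist x y ≤ c * |x - (y + m)| := by
          rw [hm]
          gcongr
          exact min_le_left _ _
      _ ≤ ‖u x - u y‖ := hum ▸ hloc x (y + m) (hm.trans_le hnear)
  · calc min c (min (c * δ) ε) * circDist x y ≤ min (c * δ) ε * 1 :=
          mul_le_mul (min_le_right _ _) (by linarith) hdist₀ (le_min (mul_nonneg hc hδ.le) hε)
      _ = min (c * δ) ε := mul_one _
      _ ≤ ‖u x - u y‖ := by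
        have hrange {z : ℝ} :=
          min_le_norm_sub_of_mem_Icc (x := x) (y := z) hδ hu hper hinj hloc hperp
        obtain hsign | hsign := abs_cases (x - (y + m))
        · rw [← hum, ← hper (y + m)]
          exact hrange ⟨by linarith, by linarith⟩
        · rw [← hum]
          exact hrange ⟨by linarith, by linarith⟩

universe w

theorem exists_pos_forall_mul_circDist_le {q lam Λ M : ℝ} (hq : 2 < q) (hlam : 0 < lam)
    (hΛ : 0 < Λ) (hM : 0 ≤ M) :
    ∃ c : ℝ, 0 < c ∧ ∀ (E : Type w) [NormedAddCommGroup E] [InnerProductSpace ℝ E] (u : ℝ → E),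
      ContDiff ℝ 1 u → Function.Periodic u 1 → (∀ a, InjOn u (Ioc a (a + 1))) →
      (∀ x, lam ≤ ‖deriv u x‖) → (∀ x, ‖deriv u x‖ ≤ Λ) →
      tangentPointEnergy q u ≤ ENNReal.ofReal M → ∀ x y, c * circDist x y ≤ ‖u x - u y‖ := by
  obtain ⟨η, hη, hsin⟩ := exists_pos_forall_mul_rpow_lt (β := 1 - 2 / q) (κ := 1 / 4)
    (by rw [sub_pos, div_lt_one] <;> linarith) (by norm_num) (tangentHolderConst q lam Λ M)
  obtain ⟨ε, hε, henergy⟩ := exists_pos_forall_mul_rpow_lt (sub_pos.2 hq) one_pos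
    (16 * Λ ^ 2 * (q * M) * (3 / lam) ^ q)
  set δ := min (η / 2) 1
  have hδ : 0 < δ := lt_min (half_pos hη) one_pos
  have hδη : δ < η := (min_le_left _ _).trans_lt (half_lt_self hη)
  have hε' : 0 < min (4 * Λ * δ) ε := by positivity
  refine ⟨_, lt_min (half_pos hlam) (lt_min (mul_pos (half_pos hlam) hδ) hε'),
    fun E _ _ u hu hper hinj hlow hderiv hTP => ?_⟩
  have hdiff : Differentiable ℝ u := hu.differentiable one_ne_zero
  have hne (t : ℝ) : deriv u t ≠ 0 := norm_pos_iff.1 (hlam.trans_le (hlow t))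
  have hup := norm_sub_le_of_norm_deriv_le hdiff hderiv
  have hangle (x y : ℝ) (hxy : |x - y| ≤ δ) : angle (deriv u x) (deriv u y) ≤ Real.pi / 6 :=
    angle_deriv_le_pi_div_six hu hne (fun s t hst => (sin_angle_deriv_sq_le hq hlam hΛ.le hM hu
      hper hinj hlow hup hTP (hst.trans (min_le_right _ _))).trans
        (hsin _ (abs_nonneg _) (hst.trans_lt hδη)).le) hxy
  refine mul_circDist_le_norm_sub (half_pos hlam).le hδ hε'.le hdiff hper hinj (fun x y hxy => ?_)
    fun x y => ?_
  · refine mul_abs_sub_le_norm_sub_of_angle_deriv_le (hne y) hdiff hlow fun t ht => ?_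
    have hty : |t - y| ≤ δ := by
      rw [uIcc_comm] at ht
      exact (abs_sub_left_of_mem_uIcc ht).trans hxy
    linarith [hangle t y hty, Real.pi_pos]
  · exact le_norm_sub_of_inner_eq_zero (by linarith) hlam hΛ hM hu hper hlow hup hTP hangle
      (min_le_right _ _) (min_le_left _ _)
      fun d hd₀ hd => henergy d hd₀ (hd.trans_le (min_le_right _ _))

theorem uniform_biLipschitz_radius_general {q lam Λ M : ℝ} (hq : 2 < q) (hlam : 0 < lam)
    (hΛ : 0 < Λ) (hM : 0 ≤ M) :
    ∃ R : ℝ, 0 < R ∧ ∀ (E : Type w) [NormedAddCommGroup E] [InnerProductSpace ℝ E]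
      (u v : ℝ → E), ContDiff ℝ 1 u → Function.Periodic u 1 →
      (∀ x y, u x = u y → (x : AddCircle (1 : ℝ)) = y) →
      (∀ x, lam ≤ ‖deriv u x‖) → (∀ x, ‖deriv u x‖ ≤ Λ) →
      tangentPointEnergy q u ≤ ENNReal.ofReal M →
      Function.Periodic v 1 → (∀ x y, ‖(v x - u x) - (v y - u y)‖ ≤ R * |x - y|) →
      ∀ x y, 2 * R * circDist x y ≤ ‖u x - u y‖ ∧ ‖u x - u y‖ ≤ 2 * ‖v x - v y‖ := by
  obtain ⟨c, hc, hbound⟩ := exists_pos_forall_mul_circDist_le hq hlam hΛ hM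
  refine ⟨c / 2, half_pos hc, fun E _ _ u v hu huper hemb hlow hup hTP hvper hvu x y => ?_⟩
  have hchord : c * circDist x y ≤ ‖u x - u y‖ :=
    hbound E u hu huper (injOn_Ioc_of_coe_addCircle_eq hemb) hlow hup hTP x y
  have hperturb : ‖(v x - u x) - (v y - u y)‖ ≤ c / 2 * circDist x y :=
    norm_sub_le_mul_circDist (hvper.sub huper) hvu x y
  have htriangle := norm_sub_norm_le (u x - u y) (v x - v y)
  rw [norm_sub_rev (u x - u y), sub_sub_sub_comm] at htriangle
  exact ⟨by linarith, by linarith⟩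

end Curve

theorem bil_lt_top {n : ℕ} {u : ℝ → EuclideanSpace ℝ (Fin n)} {c : ℝ} (hc : 0 < c)
    (h : ∀ x y, c * circDist x y ≤ ‖u x - u y‖) : bil u < ⊤ := by
  refine lt_of_le_of_lt ?_ (ENNReal.ofReal_lt_top (r := c⁻¹))
  refine iSup_le fun x => iSup_le fun y => iSup_le fun hxy => ?_
  have hdist : 0 < circDist x y := (norm_nonneg _).lt_of_ne' hxy
  have hchord : 0 < ‖u x - u y‖ := (mul_pos hc hdist).trans_le (h x y)
  rw [← ENNReal.ofReal_div_of_pos hchord]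
  refine ENNReal.ofReal_le_ofReal ?_
  rw [div_le_iff₀ hchord, inv_mul_eq_div, le_div_iff₀' hc]
  exact h x y

theorem bil_le_mul_bil {n : ℕ} {u v : ℝ → EuclideanSpace ℝ (Fin n)} {K : ℝ} (hK : 0 < K)
    (h : ∀ x y, ‖u x - u y‖ ≤ K * ‖v x - v y‖) : bil v ≤ ENNReal.ofReal K * bil u := by
  refine iSup_le fun x => iSup_le fun y => iSup_le fun hxy => ?_
  have hK' : ENNReal.ofReal K ≠ 0 := by simpa using hK
  calc ENNReal.ofReal (circDist x y) / ENNReal.ofReal ‖v x - v y‖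
      = ENNReal.ofReal K *
          (ENNReal.ofReal (circDist x y) / ENNReal.ofReal (K * ‖v x - v y‖)) := by
        rw [ENNReal.ofReal_mul hK.le, ← mul_div_assoc,
          ENNReal.mul_div_mul_left _ _ hK' ENNReal.ofReal_ne_top]
    _ ≤ ENNReal.ofReal K * (ENNReal.ofReal (circDist x y) / ENNReal.ofReal ‖u x - u y‖) := by
        gcongr
        exact h x y
    _ ≤ ENNReal.ofReal K * bil u := by
        gcongr
        exact le_iSup₂_of_le x y (le_iSup_of_le hxy le_rfl)

/-- Corollary 3.8, uniform bi-Lipschitz radius: there is a radius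
`R = R(lam, Λ, M, n, q) > 0` such that for every embedded regular curve `u` with
`lam ≤ |u'| ≤ Λ` and `TP(u) ≤ M` and every `C¹` curve `ũ` with
`‖(ũ - u)'‖_{L^∞} ≤ R` one has `bil(ũ) ≤ 2 bil(u) < ∞`. -/
theorem uniform_biLipschitz_radius (n : ℕ) (q lam Λ M : ℝ) (hq : 2 < q)
    (hlam : 0 < lam) (hΛ : 0 < Λ) (hM : 0 < M) :
    ∃ R : ℝ, 0 < R ∧ ∀ u v : ℝ → EuclideanSpace ℝ (Fin n),
      ContDiff ℝ 1 u → Function.Periodic u 1 → Embedded u →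
      sobSemPow (1 - 1 / q) q (deriv u) < ⊤ →
      (∀ x, lam ≤ ‖deriv u x‖) → (∀ x, ‖deriv u x‖ ≤ Λ) →
      TPe q u ≤ ENNReal.ofReal M →
      ContDiff ℝ 1 v → Function.Periodic v 1 →
      (∀ x, ‖deriv (fun t => v t - u t) x‖ ≤ R) →
      bil v ≤ 2 * bil u ∧ bil u < ⊤ := by
  obtain ⟨R, hR, hbound⟩ := uniform_biLipschitz_radius_general hq hlam hΛ hM.le
  refine ⟨R, hR, fun u v hu huper hemb _ hlow hup hTP hv hvper hvu => ?_⟩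
  have hdiff : Differentiable ℝ fun t => v t - u t :=
    (hv.differentiable one_ne_zero).sub (hu.differentiable one_ne_zero)
  rw [TPe_eq_tangentPointEnergy (by linarith)] at hTP
  have hchord := hbound _ u v hu huper hemb hlow hup hTP hvper
    (norm_sub_le_of_norm_deriv_le hdiff hvu)
  exact ⟨by simpa using bil_le_mul_bil two_pos fun x y => (hchord x y).2,
    bil_lt_top (mul_pos two_pos hR) fun x y => (hchord x y).1⟩
end
end

section
/- Let q > 2 and let u : ℝ/ℤ → ℝⁿ be an embedded, regular C¹ curve with bil(u) < ∞ and [u']_{W^{1-1/q,q}} < ∞, and let v, w : ℝ/ℤ → ℝⁿ be C¹ with finite W^{1-1/q,q} seminorms of their derivatives. Then the functional M(u; v, w) = ∬_{(ℝ/ℤ)²} |u'(y)∧(u(x)−u(y))|^{q−2} / |u(x)−u(y)|^{2q} · ⟨u'(y)∧(u(x)−u(y)), v'(y)∧(w(x)−w(y)−(x−y)w'(y))⟩ dx dy satisfies |M(u; v, w)| ≤ (bil u)^{2q} · ‖u'‖_{L^∞}^{q−1} · [u']_{W^{1-1/q,q}}^{q−1} · ‖v'‖_{L^∞} · [w']_{W^{1-1/q,q}},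 where (x−y) denotes the representative of x−y in (−1/2, 1/2]. -/
open MeasureTheory Set Filter
open scoped RealInnerProductSpace ENNReal Topology

noncomputable section

/-!
Subtracting a multiple of `u'(y)` from `u(x) - u(y)` does not change `u'(y) ∧ (u(x) - u(y))`, so
all factors of the integrand of `M` are controlled by the first order Taylor remainders of `u` and
`w` at `y`. The bi-Lipschitz bound replaces the denominator by
`|x - y|^(2q) = (|x - y|²)^(q-1) |x - y|²`, which distributes one factor `|x - y|²` to each of the
`q` remainders, and Hölder's inequality separates `u` from `w`. It remains to bound the remainder
divided by `|x - y|²` in `L^q`: up to sign it is the average of `(u'(y + th) - u'(y)) / |h|` over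
`t ∈ [0, 1]`, where `h = x - y`, so Jensen's inequality, Tonelli's theorem and the dilation
`h ↦ th` bound it by the seminorm of `u'`, with constant `1`.
-/

section Wedge

variable {n : ℕ} (a b c d : EuclideanSpace ℝ (Fin n))

/-- The bivector `a ∧ b`, encoded by its coordinates `aᵢbⱼ - aⱼbᵢ`. Both orders of each pair
`{i, j}` occur, whence the factor `1 / √2`. -/
def wedge : EuclideanSpace ℝ (Fin n × Fin n) :=
  WithLp.toLp 2 fun p => (a p.1 * b p.2 - a p.2 * b p.1) / √2

lemma wedgeInner_eq_inner_wedge : wedgeInner a b c d = ⟪wedge a b, wedge c d⟫ := by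
  have hterm (i j : Fin n) :
      (c i * d j - c j * d i) / √2 * ((a i * b j - a j * b i) / √2) =
        (a i * c i * (b j * d j) + b i * d i * (a j * c j)
          - a i * d i * (b j * c j) - b i * c i * (a j * d j)) / 2 := by
    rw [div_mul_div_comm, Real.mul_self_sqrt zero_le_two]
    ring
  simp only [wedgeInner, wedge, PiLp.inner_apply, RCLike.inner_apply, conj_trivial,
    Fintype.sum_prod_type, hterm, ← Finset.sum_div, Finset.sum_add_distrib,
    Finset.sum_sub_distrib, ← Finset.sum_mul_sum]
  simp only [mul_comm]
  ring

lemma wedgeSq_eq_norm_wedge_sq : wedgeSq a b = ‖wedge a b‖ ^ 2 := by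
  rw [← real_inner_self_eq_norm_sq, ← wedgeInner_eq_inner_wedge, wedgeInner, wedgeSq,
    real_inner_self_eq_norm_sq, real_inner_self_eq_norm_sq, real_inner_comm b a, sq ⟪b, a⟫]

lemma norm_wedge_le : ‖wedge a b‖ ≤ ‖a‖ * ‖b‖ := by
  refine le_of_sq_le_sq ?_ (by positivity)
  rw [← wedgeSq_eq_norm_wedge_sq, wedgeSq, mul_pow]
  exact sub_le_self _ (sq_nonneg _)

lemma wedge_sub_smul_self (t : ℝ) : wedge a (b - t • a) = wedge a b := by
  ext p
  simp only [wedge, PiLp.sub_apply, PiLp.smul_apply, smul_eq_mul]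
  ring

-- If `q < 2` and `a ∧ b = 0`, the convention `0 ^ ((q - 2) / 2) = 0` gives the product its limit
-- value `0`.
lemma abs_wedgeSq_rpow_mul_wedgeInner_le {q : ℝ} (hq : 1 < q) :
    |wedgeSq a b ^ ((q - 2) / 2) * wedgeInner a b c d| ≤
      ‖wedge a b‖ ^ (q - 1) * ‖wedge c d‖ := by
  have hpow : wedgeSq a b ^ ((q - 2) / 2) = ‖wedge a b‖ ^ (q - 2) := by
    rw [wedgeSq_eq_norm_wedge_sq, ← Real.rpow_natCast, ← Real.rpow_mul (norm_nonneg _)]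
    push_cast
    ring_nf
  calc |wedgeSq a b ^ ((q - 2) / 2) * wedgeInner a b c d|
      = ‖wedge a b‖ ^ (q - 2) * |⟪wedge a b, wedge c d⟫| := by
        rw [hpow, wedgeInner_eq_inner_wedge, abs_mul, abs_of_nonneg (by positivity)]
    _ ≤ ‖wedge a b‖ ^ (q - 2) * (‖wedge a b‖ * ‖wedge c d‖) := by
        gcongr
        exact abs_real_inner_le_norm _ _
    _ = ‖wedge a b‖ ^ (q - 1) * ‖wedge c d‖ := by
        rw [← mul_assoc, ← Real.rpow_add_one' (norm_nonneg _) (by linarith)]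
        ring_nf

end Wedge

section Circle

lemma wrap_eq_toIocMod (z : ℝ) : wrap z = toIocMod one_pos (-(1 / 2)) z := by
  refine ((toIocMod_eq_iff one_pos).2 ⟨⟨?_, ?_⟩, -⌊1 / 2 - z⌋, ?_⟩).symm
  · rw [wrap]
    linarith [Int.fract_lt_one (1 / 2 - z)]
  · rw [wrap]
    linarith [Int.fract_nonneg (1 / 2 - z)]
  · rw [wrap, Int.fract, neg_smul, zsmul_one]
    ring

lemma wrap_mem_Ioc (z : ℝ) : wrap z ∈ Ioc (-(1 / 2) : ℝ) (1 / 2) := by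
  have h := toIocMod_mem_Ioc one_pos (-(1 / 2)) z
  rwa [← wrap_eq_toIocMod, show -(1 / 2) + 1 = (1 / 2 : ℝ) by norm_num] at h

lemma wrap_eq_self {h : ℝ} (hh : h ∈ Ioc (-(1 / 2) : ℝ) (1 / 2)) : wrap h = h := by
  rwa [wrap_eq_toIocMod, toIocMod_eq_self, show -(1 / 2) + 1 = (1 / 2 : ℝ) by norm_num]

lemma wrap_add_one (z : ℝ) : wrap (z + 1) = wrap z := by
  rw [wrap_eq_toIocMod, wrap_eq_toIocMod, toIocMod_add_right]

lemma measurable_wrap : Measurable wrap :=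
  (measurable_fract.comp (measurable_id.const_sub _)).const_sub _

lemma circDist_eq_abs_wrap (x y : ℝ) : circDist x y = |wrap (x - y)| := by
  have hcoe : ((x - y : ℝ) : AddCircle (1 : ℝ)) = (wrap (x - y) : ℝ) := by
    rw [wrap_eq_toIocMod, toIocMod, AddCircle.coe_sub _ _ (_ • _), AddCircle.coe_zsmul,
      AddCircle.coe_period, smul_zero, sub_zero]
  obtain ⟨hlow, hup⟩ := wrap_mem_Ioc (x - y)
  rw [circDist, hcoe, AddCircle.norm_coe_eq_abs_iff 1 one_ne_zero, abs_one]
  exact abs_le.2 ⟨hlow.le, hup⟩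

lemma circDist_add_left {h : ℝ} (hh : h ∈ Ioc (-(1 / 2) : ℝ) (1 / 2)) (y : ℝ) :
    circDist (y + h) y = |h| := by
  rw [circDist_eq_abs_wrap, add_sub_cancel_left, wrap_eq_self hh]

lemma circDist_add_one (x y : ℝ) : circDist (x + 1) y = circDist x y := by
  rw [circDist_eq_abs_wrap, circDist_eq_abs_wrap, add_sub_right_comm, wrap_add_one]

lemma eq_of_circDist_eq_zero {α : Type*} {f : ℝ → α} (hf : Function.Periodic f 1) {x y : ℝ}
    (h : circDist x y = 0) : f x = f y := by
  rw [circDist, AddCircle.coe_sub, norm_sub_eq_zero_iff] at h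
  rw [← hf.lift_coe x, h, hf.lift_coe]

lemma measurable_circDist : Measurable fun p : ℝ × ℝ => circDist p.1 p.2 := by
  simp only [circDist_eq_abs_wrap]
  exact (measurable_wrap.comp (measurable_fst.sub measurable_snd)).abs

lemma setLIntegral_Ioc_eq_comp_add_of_periodic {T : ℝ} (hT : 0 < T) {f : ℝ → ℝ≥0∞}
    (hf : Function.Periodic f T) (a b y : ℝ) :
    ∫⁻ x in Ioc a (a + T), f x = ∫⁻ h in Ioc b (b + T), f (y + h) := by
  have hpre : (y + ·) ⁻¹' Ioc (y + b) (y + b + T) = Ioc b (b + T) := by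
    rw [preimage_const_add_Ioc, add_sub_cancel_left, add_assoc, add_sub_cancel_left]
  have hfund : ∫⁻ x in Ioc a (a + T), f x = ∫⁻ x in Ioc (y + b) (y + b + T), f x :=
    (isAddFundamentalDomain_Ioc hT a).setLIntegral_eq
      (isAddFundamentalDomain_Ioc hT (y + b)) f hf.map_vadd_zmultiples
  rw [hfund, ← hpre]
  exact ((measurePreserving_add_left volume y).setLIntegral_comp_preimage_emb
    (measurableEmbedding_addLeft y) f _).symm

lemma setLIntegral_unitSq_eq_of_periodic {G : ℝ × ℝ → ℝ≥0∞} (hG : Measurable G)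
    (hper : ∀ x y, G (x + 1, y) = G (x, y)) :
    ∫⁻ p in unitSq, G p =
      ∫⁻ y in Ioc (0 : ℝ) 1, ∫⁻ h in Ioc (-(1 / 2) : ℝ) (1 / 2), G (y + h, y) := by
  rw [unitSq, Measure.volume_eq_prod, setLIntegral_prod_symm G hG.aemeasurable]
  refine lintegral_congr fun y => ?_
  have h := setLIntegral_Ioc_eq_comp_add_of_periodic one_pos (f := fun x => G (x, y))
    (fun x => hper x y) 0 (-(1 / 2)) y
  rwa [zero_add, show -(1 / 2) + 1 = (1 / 2 : ℝ) by norm_num] at h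

end Circle

section Hardy

lemma rpow_lintegral_le_lintegral_rpow {α : Type*} [MeasurableSpace α] {μ : Measure α}
    [IsProbabilityMeasure μ] {f : α → ℝ≥0∞} (hf : AEMeasurable f μ) {q : ℝ} (hq : 1 ≤ q) :
    (∫⁻ t, f t ∂μ) ^ q ≤ ∫⁻ t, f t ^ q ∂μ := by
  have h := eLpNorm'_le_eLpNorm'_of_exponent_le one_pos hq μ hf.aestronglyMeasurable
  simp only [eLpNorm', enorm_eq_self, ENNReal.rpow_one, div_one] at h
  rwa [one_div, ENNReal.le_rpow_inv_iff (by linarith)] at h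

lemma div_enorm_rpow_le {q t : ℝ} (hq : 1 ≤ q) (ht : t ∈ Ioc (0 : ℝ) 1) (a : ℝ≥0∞) (h : ℝ) :
    (a / ‖h‖ₑ) ^ q ≤ ENNReal.ofReal t * (a / ‖t * h‖ₑ) ^ q := by
  have hscale : a / ‖h‖ₑ = ENNReal.ofReal t * (a / ‖t * h‖ₑ) := by
    rw [enorm_mul, Real.enorm_of_nonneg ht.1.le, ← mul_div_assoc,
      ENNReal.mul_div_mul_left _ _ (by simpa using ht.1) ENNReal.ofReal_ne_top]
  rw [hscale, ENNReal.mul_rpow_of_nonneg _ _ (by linarith)]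
  gcongr
  exact ENNReal.rpow_le_self_of_le_one (by simpa using ht.2) hq

variable {S : Set ℝ}

lemma ofReal_mul_setLIntegral_comp_mul_left_le (hS : OrdConnected S) (h0 : (0 : ℝ) ∈ S)
    {f : ℝ → ℝ≥0∞} (hf : Measurable f) {t : ℝ} (ht : t ∈ Ioc (0 : ℝ) 1) :
    ENNReal.ofReal t * ∫⁻ h in S, f (t * h) ≤ ∫⁻ h in S, f h := by
  have hsub : S ⊆ (t * ·) ⁻¹' S := fun h hh =>
    (hS.convex.starConvex h0).smul_mem hh ht.1.le ht.2
  have hvol : ENNReal.ofReal t • volume.map (t * ·) = volume := by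
    simpa only [abs_of_pos ht.1] using Real.smul_map_volume_mul_left ht.1.ne'
  calc ENNReal.ofReal t * ∫⁻ h in S, f (t * h)
      ≤ ENNReal.ofReal t * ∫⁻ h in (t * ·) ⁻¹' S, f (t * h) := by
        gcongr
    _ = ∫⁻ h in S, f h ∂(ENNReal.ofReal t • volume.map (t * ·)) := by
        rw [Measure.restrict_smul, lintegral_smul_measure, smul_eq_mul,
          setLIntegral_map hS.measurableSet hf (measurable_const_mul t)]
    _ = ∫⁻ h in S, f h := by rw [hvol]

lemma setLIntegral_average_div_rpow_le (hS : OrdConnected S) (h0 : (0 : ℝ) ∈ S) {φ : ℝ → ℝ≥0∞}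
    (hφ : Measurable φ) {q : ℝ} (hq : 1 ≤ q) :
    ∫⁻ h in S, ((∫⁻ t in Ioc (0 : ℝ) 1, φ (t * h)) / ‖h‖ₑ) ^ q ≤
      ∫⁻ h in S, (φ h / ‖h‖ₑ) ^ q := by
  have : IsProbabilityMeasure (volume.restrict (Ioc (0 : ℝ) 1)) := ⟨by simp⟩
  calc ∫⁻ h in S, ((∫⁻ t in Ioc (0 : ℝ) 1, φ (t * h)) / ‖h‖ₑ) ^ q
      ≤ ∫⁻ h in S, ∫⁻ t in Ioc (0 : ℝ) 1, (φ (t * h) / ‖h‖ₑ) ^ q := by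
        refine lintegral_mono fun h => ?_
        have hφh : Measurable fun t => φ (t * h) := by fun_prop
        simp only [div_eq_mul_inv]
        rw [← lintegral_mul_const _ hφh]
        exact rpow_lintegral_le_lintegral_rpow (by fun_prop) hq
    _ = ∫⁻ t in Ioc (0 : ℝ) 1, ∫⁻ h in S, (φ (t * h) / ‖h‖ₑ) ^ q :=
        lintegral_lintegral_swap (Measurable.aemeasurable (by fun_prop))
    _ ≤ ∫⁻ t in Ioc (0 : ℝ) 1, ENNReal.ofReal t * ∫⁻ h in S, (φ (t * h) / ‖t * h‖ₑ) ^ q := by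
        refine setLIntegral_mono' measurableSet_Ioc fun t ht => ?_
        rw [← lintegral_const_mul _ (by fun_prop)]
        exact lintegral_mono fun h => div_enorm_rpow_le hq ht _ h
    _ ≤ ∫⁻ _ in Ioc (0 : ℝ) 1, ∫⁻ h in S, (φ h / ‖h‖ₑ) ^ q :=
        setLIntegral_mono' measurableSet_Ioc fun t ht =>
          ofReal_mul_setLIntegral_comp_mul_left_le hS h0
            (f := fun h => (φ h / ‖h‖ₑ) ^ q) (by fun_prop) ht
    _ = ∫⁻ h in S, (φ h / ‖h‖ₑ) ^ q := by simp

end Hardy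

section Taylor

variable {E : Type*} [NormedAddCommGroup E] [NormedSpace ℝ E]

/-- The first order Taylor remainder at `y` of a curve on the circle; the increment `x - y` is
represented in `(-1/2, 1/2]`. -/
def taylorRemainder (f : ℝ → E) (x y : ℝ) : E := f x - f y - wrap (x - y) • deriv f y

/-- The norm of the first order Taylor remainder relative to the squared distance on the circle. -/
def taylorQuot (f : ℝ → E) (x y : ℝ) : ℝ := ‖taylorRemainder f x y‖ / circDist x y ^ 2

/-- The norm of the difference quotient of `f` with respect to the distance on the circle. -/
def circSlope {F : Type*} [NormedAddCommGroup F] (f : ℝ → F) (x y : ℝ) : ℝ :=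
  ‖f x - f y‖ / circDist x y

lemma taylorQuot_nonneg (f : ℝ → E) (x y : ℝ) : 0 ≤ taylorQuot f x y := by
  unfold taylorQuot
  positivity

lemma measurable_circSlope {F : Type*} [NormedAddCommGroup F] {f : ℝ → F} (hf : Continuous f) :
    Measurable fun p : ℝ × ℝ => circSlope f p.1 p.2 :=
  (by fun_prop : Continuous fun p : ℝ × ℝ => ‖f p.1 - f p.2‖).measurable.div measurable_circDist

lemma measurable_taylorQuot {f : ℝ → E} (hf : ContDiff ℝ 1 f) :
    Measurable fun p : ℝ × ℝ => taylorQuot f p.1 p.2 := by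
  have hincrement : Continuous fun p : ℝ × ℝ => f p.1 - f p.2 := by fun_prop
  have hderiv : Continuous fun p : ℝ × ℝ => deriv f p.2 :=
    (hf.continuous_deriv le_rfl).comp continuous_snd
  have hwrap : Measurable fun p : ℝ × ℝ => wrap (p.1 - p.2) :=
    measurable_wrap.comp (measurable_fst.sub measurable_snd)
  exact (hincrement.stronglyMeasurable.sub
    (hwrap.stronglyMeasurable.smul hderiv.stronglyMeasurable)).norm.measurable.div
      (measurable_circDist.pow_const 2)

lemma periodic_deriv {f : ℝ → E} {c : ℝ} (hf : Function.Periodic f c) :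
    Function.Periodic (deriv f) c := fun x => by
  rw [← deriv_comp_add_const, funext hf]

lemma circSlope_add_one {F : Type*} [NormedAddCommGroup F] {f : ℝ → F}
    (hf : Function.Periodic f 1) (x y : ℝ) : circSlope f (x + 1) y = circSlope f x y := by
  rw [circSlope, circSlope, hf x, circDist_add_one]

lemma taylorQuot_add_one {f : ℝ → E} (hf : Function.Periodic f 1) (x y : ℝ) :
    taylorQuot f (x + 1) y = taylorQuot f x y := by
  rw [taylorQuot, taylorQuot, taylorRemainder, taylorRemainder, hf x, circDist_add_one,
    add_sub_right_comm, wrap_add_one]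

lemma ofReal_circSlope_add_left {F : Type*} [NormedAddCommGroup F] (f : ℝ → F) {h : ℝ}
    (hh : h ∈ Ioc (-(1 / 2) : ℝ) (1 / 2)) (y : ℝ) :
    ENNReal.ofReal (circSlope f (y + h) y) = ‖f (y + h) - f y‖ₑ / ‖h‖ₑ := by
  rcases eq_or_ne h 0 with rfl | hne
  · simp [circSlope]
  · rw [circSlope, circDist_add_left hh, ENNReal.ofReal_div_of_pos (abs_pos.2 hne), ofReal_norm,
      Real.enorm_eq_ofReal_abs]

variable [CompleteSpace E]

lemma sub_sub_smul_deriv_eq_integral {f : ℝ → E} (hf : ContDiff ℝ 1 f) (y h : ℝ) :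
    f (y + h) - f y - h • deriv f y =
      h • ∫ t in (0 : ℝ)..1, (deriv f (y + t * h) - deriv f y) := by
  have := hf.continuous_deriv le_rfl
  have hftc : h • ∫ t in (0 : ℝ)..1, deriv f (y + t • h) = f (y + h) - f y :=
    intervalIntegral.integral_unitInterval_deriv_eq_sub (by fun_prop)
      fun t _ => (hf.differentiable one_ne_zero _).hasDerivAt
  rw [intervalIntegral.integral_sub (Continuous.intervalIntegrable (by fun_prop) _ _)
    intervalIntegrable_const, smul_sub, ← hftc]
  simp

lemma ofReal_taylorQuot_add_left_le {f : ℝ → E} (hf : ContDiff ℝ 1 f) {h : ℝ}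
    (hh : h ∈ Ioc (-(1 / 2) : ℝ) (1 / 2)) (y : ℝ) :
    ENNReal.ofReal (taylorQuot f (y + h) y) ≤
      (∫⁻ t in Ioc (0 : ℝ) 1, ‖deriv f (y + t * h) - deriv f y‖ₑ) / ‖h‖ₑ := by
  rw [taylorQuot, taylorRemainder, circDist_add_left hh, add_sub_cancel_left, wrap_eq_self hh,
    sub_sub_smul_deriv_eq_integral hf, norm_smul, Real.norm_eq_abs, sq]
  rcases eq_or_ne h 0 with rfl | hne
  · simp
  · rw [mul_div_mul_left _ _ (abs_ne_zero.2 hne), ENNReal.ofReal_div_of_pos (abs_pos.2 hne),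
      ofReal_norm, ← Real.enorm_eq_ofReal_abs, intervalIntegral.integral_of_le zero_le_one]
    gcongr
    exact enorm_integral_le_lintegral_enorm _

lemma setLIntegral_taylorQuot_rpow_le {f : ℝ → E} (hf : ContDiff ℝ 1 f)
    (hper : Function.Periodic f 1) {q : ℝ} (hq : 1 ≤ q) :
    ∫⁻ p in unitSq, ENNReal.ofReal (taylorQuot f p.1 p.2) ^ q ≤
      ∫⁻ p in unitSq, ENNReal.ofReal (circSlope (deriv f) p.1 p.2) ^ q := by
  have hf' : Continuous (deriv f) := hf.continuous_deriv le_rfl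
  rw [setLIntegral_unitSq_eq_of_periodic ((measurable_taylorQuot hf).ennreal_ofReal.pow_const q)
      fun x y => by rw [taylorQuot_add_one hper],
    setLIntegral_unitSq_eq_of_periodic ((measurable_circSlope hf').ennreal_ofReal.pow_const q)
      fun x y => by rw [circSlope_add_one (periodic_deriv hper)]]
  refine lintegral_mono fun y => ?_
  calc ∫⁻ h in Ioc (-(1 / 2) : ℝ) (1 / 2), ENNReal.ofReal (taylorQuot f (y + h) y) ^ q
      ≤ ∫⁻ h in Ioc (-(1 / 2) : ℝ) (1 / 2),
          ((∫⁻ t in Ioc (0 : ℝ) 1, ‖deriv f (y + t * h) - deriv f y‖ₑ) / ‖h‖ₑ) ^ q := by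
        refine setLIntegral_mono' measurableSet_Ioc fun h hh => ?_
        gcongr
        exact ofReal_taylorQuot_add_left_le hf hh y
    _ ≤ ∫⁻ h in Ioc (-(1 / 2) : ℝ) (1 / 2), (‖deriv f (y + h) - deriv f y‖ₑ / ‖h‖ₑ) ^ q :=
        setLIntegral_average_div_rpow_le ordConnected_Ioc (by norm_num)
          (φ := fun h => ‖deriv f (y + h) - deriv f y‖ₑ)
          (Continuous.measurable (by fun_prop)) hq
    _ = ∫⁻ h in Ioc (-(1 / 2) : ℝ) (1 / 2),
          ENNReal.ofReal (circSlope (deriv f) (y + h) y) ^ q :=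
        setLIntegral_congr_fun measurableSet_Ioc fun h hh => by
          simp only [ofReal_circSlope_add_left _ hh]

end Taylor

section Estimate

variable {n : ℕ} {q : ℝ} {u v w : ℝ → EuclideanSpace ℝ (Fin n)}

lemma sobSemPow_one_sub_one_div (hq : 0 < q) (f : ℝ → EuclideanSpace ℝ (Fin n)) :
    sobSemPow (1 - 1 / q) q f = ∫⁻ p in unitSq, ENNReal.ofReal (circSlope f p.1 p.2) ^ q := by
  have hexp : 1 + (1 - 1 / q) * q = q := by
    field_simp
    ring
  refine lintegral_congr fun p => ?_
  have hdist : 0 ≤ circDist p.1 p.2 := norm_nonneg _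
  rw [hexp, circSlope, ← Real.div_rpow (norm_nonneg _) hdist,
    ENNReal.ofReal_rpow_of_nonneg (by positivity) hq.le]

lemma setLIntegral_taylorQuot_rpow_le_sobSemPow (hu : ContDiff ℝ 1 u)
    (huper : Function.Periodic u 1) (hq : 1 ≤ q) :
    ∫⁻ p in unitSq, ENNReal.ofReal (taylorQuot u p.1 p.2) ^ q ≤
      sobSemPow (1 - 1 / q) q (deriv u) := by
  rw [sobSemPow_one_sub_one_div (by linarith)]
  exact setLIntegral_taylorQuot_rpow_le hu huper hq

lemma exists_lipschitzWith_of_periodic {E : Type*} [NormedAddCommGroup E] [NormedSpace ℝ E]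
    {f : ℝ → E} (hf : ContDiff ℝ 1 f) {c : ℝ} (hc : c ≠ 0) (hper : Function.Periodic f c) :
    ∃ C, LipschitzWith C f := by
  obtain ⟨C, hC⟩ := ((periodic_deriv hper).isBounded_of_continuous hc
    (hf.continuous_deriv le_rfl)).exists_norm_le
  exact ⟨C.toNNReal, lipschitzWith_of_nnnorm_deriv_le (hf.differentiable one_ne_zero)
    fun x => NNReal.coe_le_coe.1 ((hC _ (mem_range_self x)).trans (Real.le_coe_toNNReal C))⟩

lemma linfD_ne_top_of_lipschitzWith {C : NNReal} (hu : LipschitzWith C u) : linfD u ≠ ⊤ :=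
  ne_top_of_le_ne_top ENNReal.coe_ne_top <| iSup_le fun _ =>
    ENNReal.coe_le_coe.2 (norm_deriv_le_of_lipschitz hu)

lemma norm_deriv_le_linfD (hu : linfD u ≠ ⊤) (x : ℝ) : ‖deriv u x‖ ≤ (linfD u).toReal :=
  ENNReal.toReal_mono hu (le_iSup (fun x => (‖deriv u x‖₊ : ℝ≥0∞)) x)

lemma circDist_le_bil_mul (hbil : bil u < ⊤) (x y : ℝ) :
    circDist x y ≤ (bil u).toReal * ‖u x - u y‖ := by
  rcases eq_or_ne (circDist x y) 0 with hzero | hne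
  · rw [hzero]
    positivity
  · have hle : ENNReal.ofReal (circDist x y) / ENNReal.ofReal ‖u x - u y‖ ≤ bil u :=
      le_iSup₂_of_le x y (le_iSup_of_le hne le_rfl)
    rw [ENNReal.div_le_iff_le_mul (.inr hbil.ne) (.inl ENNReal.ofReal_ne_top)] at hle
    simpa [ENNReal.toReal_mul] using
      (ENNReal.ofReal_le_iff_le_toReal (by finiteness)).1 hle

lemma inv_norm_sub_rpow_le (hbil : bil u < ⊤) (huper : Function.Periodic u 1) {r : ℝ}
    (hr : 0 < r) (x y : ℝ) :
    (‖u x - u y‖ ^ r)⁻¹ ≤ (bil u).toReal ^ r * (circDist x y ^ r)⁻¹ := by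
  have hbi := circDist_le_bil_mul hbil x y
  have hdist : 0 ≤ circDist x y := norm_nonneg _
  rcases hdist.eq_or_lt with hzero | hpos
  · rw [eq_of_circDist_eq_zero huper hzero.symm, sub_self, norm_zero, Real.zero_rpow hr.ne',
      inv_zero]
    positivity
  · have hnorm : 0 < ‖u x - u y‖ := pos_of_mul_pos_right (hpos.trans_le hbi) ENNReal.toReal_nonneg
    rw [← div_eq_mul_inv, le_div_iff₀ (by positivity), inv_mul_le_iff₀ (by positivity), mul_comm,
      ← Real.mul_rpow ENNReal.toReal_nonneg hnorm.le]
    gcongr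

lemma abs_Mintegrand_numerator_le (hq : 1 < q) (hu : linfD u ≠ ⊤) (hv : linfD v ≠ ⊤) (x y : ℝ) :
    |wedgeSq (deriv u y) (u x - u y) ^ ((q - 2) / 2) *
        wedgeInner (deriv u y) (u x - u y) (deriv v y) (taylorRemainder w x y)| ≤
      ((linfD u).toReal * ‖taylorRemainder u x y‖) ^ (q - 1) *
        ((linfD v).toReal * ‖taylorRemainder w x y‖) := by
  have hwedge : ‖wedge (deriv u y) (u x - u y)‖ ≤
      (linfD u).toReal * ‖taylorRemainder u x y‖ := by
    rw [← wedge_sub_smul_self _ _ (wrap (x - y))]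
    refine (norm_wedge_le _ _).trans ?_
    gcongr
    exacts [norm_deriv_le_linfD hu y, le_rfl]
  refine (abs_wedgeSq_rpow_mul_wedgeInner_le _ _ _ _ hq).trans ?_
  gcongr
  refine (norm_wedge_le _ _).trans ?_
  gcongr
  exact norm_deriv_le_linfD hv y

lemma abs_Mintegrand_le (hq : 1 < q) (huper : Function.Periodic u 1) (hbil : bil u < ⊤)
    (hu : linfD u ≠ ⊤) (hv : linfD v ≠ ⊤) (x y : ℝ) :
    |Mintegrand q u v w (x, y)| ≤
      (bil u).toReal ^ (2 * q) * (linfD u).toReal ^ (q - 1) * (linfD v).toReal *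
        (taylorQuot u x y ^ (q - 1) * taylorQuot w x y) := by
  have hdist : 0 ≤ circDist x y := norm_nonneg _
  have hpow : circDist x y ^ (2 * q) = (circDist x y ^ 2) ^ (q - 1) * circDist x y ^ 2 := by
    rw [← Real.rpow_add_one' (by positivity) (by linarith), sub_add_cancel, Real.rpow_mul hdist,
      Real.rpow_two]
  calc |Mintegrand q u v w (x, y)|
      = |wedgeSq (deriv u y) (u x - u y) ^ ((q - 2) / 2) *
          wedgeInner (deriv u y) (u x - u y) (deriv v y) (taylorRemainder w x y)| *
          (‖u x - u y‖ ^ (2 * q))⁻¹ := by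
        rw [Mintegrand, ← taylorRemainder, div_mul_eq_mul_div, div_eq_mul_inv, abs_mul,
          abs_of_nonneg (by positivity : 0 ≤ (‖u x - u y‖ ^ (2 * q))⁻¹)]
    _ ≤ ((linfD u).toReal * ‖taylorRemainder u x y‖) ^ (q - 1) *
          ((linfD v).toReal * ‖taylorRemainder w x y‖) *
          ((bil u).toReal ^ (2 * q) * (circDist x y ^ (2 * q))⁻¹) := by
        gcongr
        exacts [abs_Mintegrand_numerator_le hq hu hv x y,
          inv_norm_sub_rpow_le hbil huper (by linarith) x y]
    _ = _ := by
        rw [taylorQuot, taylorQuot, Real.mul_rpow (by positivity) (norm_nonneg _),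
          Real.div_rpow (norm_nonneg _) (by positivity), hpow]
        ring

lemma measurable_Mintegrand (hu : Continuous u) (hw : Continuous w) :
    Measurable (Mintegrand q u v w) := by
  have := measurable_wrap
  have := measurable_deriv u
  have := measurable_deriv v
  have := measurable_deriv w
  unfold Mintegrand wedgeSq wedgeInner
  fun_prop

lemma setLIntegral_taylorQuot_rpow_mul_le (hq : 1 < q)
    (huC1 : ContDiff ℝ 1 u) (huper : Function.Periodic u 1)
    (hwC1 : ContDiff ℝ 1 w) (hwper : Function.Periodic w 1) :
    ∫⁻ p in unitSq, ENNReal.ofReal (taylorQuot u p.1 p.2 ^ (q - 1) * taylorQuot w p.1 p.2) ≤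
      sobSemPow (1 - 1 / q) q (deriv u) ^ ((q - 1) / q) *
        sobSemPow (1 - 1 / q) q (deriv w) ^ (1 / q) := by
  have hq0 : 0 < q := by linarith
  have hexp : 0 ≤ (q - 1) / q := div_nonneg (by linarith) hq0.le
  calc ∫⁻ p in unitSq, ENNReal.ofReal (taylorQuot u p.1 p.2 ^ (q - 1) * taylorQuot w p.1 p.2)
      = ∫⁻ p in unitSq, (ENNReal.ofReal (taylorQuot u p.1 p.2) ^ q) ^ ((q - 1) / q) *
          (ENNReal.ofReal (taylorQuot w p.1 p.2) ^ q) ^ (1 / q) := by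
        refine lintegral_congr fun p => ?_
        have hTu := taylorQuot_nonneg u p.1 p.2
        rw [← ENNReal.rpow_mul, ← ENNReal.rpow_mul, mul_div_cancel₀ _ hq0.ne',
          mul_one_div_cancel hq0.ne', ENNReal.rpow_one,
          ENNReal.ofReal_rpow_of_nonneg hTu (by linarith), ENNReal.ofReal_mul (by positivity)]
    _ ≤ (∫⁻ p in unitSq, ENNReal.ofReal (taylorQuot u p.1 p.2) ^ q) ^ ((q - 1) / q) *
          (∫⁻ p in unitSq, ENNReal.ofReal (taylorQuot w p.1 p.2) ^ q) ^ (1 / q) :=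
        ENNReal.lintegral_mul_norm_pow_le
          ((measurable_taylorQuot huC1).ennreal_ofReal.pow_const q).aemeasurable
          ((measurable_taylorQuot hwC1).ennreal_ofReal.pow_const q).aemeasurable
          hexp (by positivity) (by field_simp; ring)
    _ ≤ _ := by
        gcongr
        exacts [setLIntegral_taylorQuot_rpow_le_sobSemPow huC1 huper hq.le,
          setLIntegral_taylorQuot_rpow_le_sobSemPow hwC1 hwper hq.le]

lemma setLIntegral_enorm_Mintegrand_le (hq : 1 < q)
    (huC1 : ContDiff ℝ 1 u) (huper : Function.Periodic u 1) (hbil : bil u < ⊤)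
    (hv : linfD v ≠ ⊤) (hwC1 : ContDiff ℝ 1 w) (hwper : Function.Periodic w 1) :
    ∫⁻ p in unitSq, ‖Mintegrand q u v w p‖ₑ ≤
      ENNReal.ofReal
          ((bil u).toReal ^ (2 * q) * (linfD u).toReal ^ (q - 1) * (linfD v).toReal) *
        (sobSemPow (1 - 1 / q) q (deriv u) ^ ((q - 1) / q) *
          sobSemPow (1 - 1 / q) q (deriv w) ^ (1 / q)) := by
  obtain ⟨C, hC⟩ := exists_lipschitzWith_of_periodic huC1 one_ne_zero huper
  have hTu := measurable_taylorQuot huC1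
  have hTw := measurable_taylorQuot hwC1
  refine le_trans ?_
    (mul_le_mul_right (setLIntegral_taylorQuot_rpow_mul_le hq huC1 huper hwC1 hwper) _)
  rw [← lintegral_const_mul _ (by fun_prop)]
  refine lintegral_mono fun p => ?_
  rw [Real.enorm_eq_ofReal_abs, ← ENNReal.ofReal_mul (by positivity)]
  exact ENNReal.ofReal_le_ofReal
    (abs_Mintegrand_le hq huper hbil (linfD_ne_top_of_lipschitzWith hC) hv p.1 p.2)

theorem Mfun_estimate_general {C : NNReal} (hq : 1 < q)
    (huC1 : ContDiff ℝ 1 u) (huper : Function.Periodic u 1)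
    (hbil : bil u < ⊤) (hsemu : sobSemPow (1 - 1 / q) q (deriv u) < ⊤)
    (hv : LipschitzWith C v)
    (hwC1 : ContDiff ℝ 1 w) (hwper : Function.Periodic w 1)
    (hsemw : sobSemPow (1 - 1 / q) q (deriv w) < ⊤) :
    IntegrableOn (Mintegrand q u v w) unitSq ∧
      |Mfun q u v w| ≤
        (bil u).toReal ^ (2 * q) * (linfD u).toReal ^ (q - 1) *
          (sobSemPow (1 - 1 / q) q (deriv u)).toReal ^ ((q - 1) / q) *
          (linfD v).toReal *
          (sobSemPow (1 - 1 / q) q (deriv w)).toReal ^ (1 / q) := by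
  have hbound := setLIntegral_enorm_Mintegrand_le hq huC1 huper hbil
    (linfD_ne_top_of_lipschitzWith hv) hwC1 hwper
  have hSu := ENNReal.rpow_ne_top_of_nonneg
    (div_nonneg (by linarith) (by linarith) : 0 ≤ (q - 1) / q) hsemu.ne
  have hSw := ENNReal.rpow_ne_top_of_nonneg
    (one_div_nonneg.2 (by linarith) : 0 ≤ 1 / q) hsemw.ne
  have hfin (r : ℝ) := ENNReal.mul_ne_top (ENNReal.ofReal_ne_top (r := r))
    (ENNReal.mul_ne_top hSu hSw)
  refine ⟨⟨(measurable_Mintegrand huC1.continuous hwC1.continuous).aestronglyMeasurable,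
    hbound.trans_lt (hfin _).lt_top⟩, ?_⟩
  have hreal := ENNReal.toReal_mono (hfin _) ((enorm_integral_le_lintegral_enorm _).trans hbound)
  rw [toReal_enorm, Real.norm_eq_abs, ENNReal.toReal_mul, ENNReal.toReal_mul,
    ENNReal.toReal_ofReal (by positivity), ← ENNReal.toReal_rpow, ← ENNReal.toReal_rpow] at hreal
  exact hreal.trans_eq (by ring)

end Estimate

/-- estimate for the functional `M(u;v,w)` in the proof of
Proposition 3.9: `|M(u;v,w)| ≤ (bil u)^{2q} ‖u'‖_{L^∞}^{q-1} [u']_{W^{1-1/q,q}}^{q-1}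
‖v'‖_{L^∞} [w']_{W^{1-1/q,q}}`; the integrand is integrable. -/
theorem Mfun_estimate (n : ℕ) (q : ℝ) (hq : 2 < q)
    (u v w : ℝ → EuclideanSpace ℝ (Fin n))
    (huC1 : ContDiff ℝ 1 u) (huper : Function.Periodic u 1)
    (hemb : Embedded u) (hreg : Regular u)
    (hbil : bil u < ⊤) (hsemu : sobSemPow (1 - 1 / q) q (deriv u) < ⊤)
    (hvC1 : ContDiff ℝ 1 v) (hvper : Function.Periodic v 1)
    (hsemv : sobSemPow (1 - 1 / q) q (deriv v) < ⊤)
    (hwC1 : ContDiff ℝ 1 w) (hwper : Function.Periodic w 1)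
    (hsemw : sobSemPow (1 - 1 / q) q (deriv w) < ⊤) :
    IntegrableOn (Mintegrand q u v w) unitSq ∧
      |Mfun q u v w| ≤
        (bil u).toReal ^ (2 * q) * (linfD u).toReal ^ (q - 1) *
          (sobSemPow (1 - 1 / q) q (deriv u)).toReal ^ ((q - 1) / q) *
          (linfD v).toReal *
          (sobSemPow (1 - 1 / q) q (deriv w)).toReal ^ (1 / q) := by
  obtain ⟨C, hC⟩ := exists_lipschitzWith_of_periodic hvC1 one_ne_zero hvper
  exact Mfun_estimate_general (by linarith) huC1 huper hbil hsemu hC hwC1 hwper hsemw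
end
end
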